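/- arXiv:1608.01488 — 2 statements merged into one kernel-verified Lean document; each statement's English description precedes it below -/
import Mathlib

section
/- Let G be any connected plane graph on n ≥ 5 vertices, and suppose a fire breaks out at a vertex r of G. Then there is a strategy using 2 + ⌊(deg(r) − 2)/2⌋ firefighters in the first round and 2 firefighters in each subsequent round that saves more than n/3 − 1 vertices of G. -/
/-- The set of vertices on fire after `t` fire-spread rounds, when the fire breaks out
at `v` and the firefighters protect the vertices of `P s` in round `s + 1` (protection
happens just before the `s`-th spread step and is permanent). -/
def burnedSet {V : Type*} (G : SimpleGraph V) (v : V) (P : ℕ → Set V) : ℕ → Set V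
  | 0 => {v}
  | t + 1 => burnedSet G v P t ∪
      {w | (∃ u ∈ burnedSet G v P t, G.Adj u w) ∧ ∀ s ≤ t, w ∉ P s}

/-- A strategy `P` is valid for the per-round budgets `b` if in each round it protects
at most `b t` vertices, none of which are already on fire. -/
def ValidStrategy {V : Type*} (G : SimpleGraph V) (b : ℕ → ℕ) (v : V) (P : ℕ → Set V) : Prop :=
  ∀ t, (P t).Finite ∧ (P t).ncard ≤ b t ∧ Disjoint (P t) (burnedSet G v P t)

/-- `sn G b v` is the maximum number of vertices that can be saved (i.e. that never
catch fire) when the fire breaks out at `v` and the firefighters may protect at most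
`b t` vertices in round `t + 1`. -/
noncomputable def sn {V : Type*} (G : SimpleGraph V) (b : ℕ → ℕ) (v : V) : ℕ :=
  sSup {m | ∃ P, ValidStrategy G b v P ∧
    m = Nat.card {w : V | ∀ t, w ∉ burnedSet G v P t}}

/-- The surviving rate of `G` with per-round budgets `b` : the expected fraction of
vertices that can be saved when the starting vertex is chosen uniformly at random. -/
noncomputable def survivingRate {V : Type*} [Fintype V] (G : SimpleGraph V) (b : ℕ → ℕ) : ℝ :=
  (∑ v : V, (sn G b v : ℝ)) / (Fintype.card V : ℝ) ^ 2

/-- A plane embedding of a simple graph: vertices are points of the plane and edges are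
simple arcs between their endpoints, such that arcs avoid all other vertices and two
arcs of distinct edges meet only in common endpoints. -/
structure PlaneEmbedding {V : Type*} (G : SimpleGraph V) where
  pos : V → ℝ × ℝ
  arc : V → V → ℝ → ℝ × ℝ
  pos_inj : Function.Injective pos
  arc_cont : ∀ ⦃u v⦄, G.Adj u v → Continuous (arc u v)
  arc_injOn : ∀ ⦃u v⦄, G.Adj u v → Set.InjOn (arc u v) (Set.Icc 0 1)
  arc_zero : ∀ ⦃u v⦄, G.Adj u v → arc u v 0 = pos u
  arc_one : ∀ ⦃u v⦄, G.Adj u v → arc u v 1 = pos v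
  arc_symm : ∀ ⦃u v⦄, G.Adj u v → ∀ t, arc v u t = arc u v (1 - t)
  arc_avoid : ∀ ⦃u v⦄, G.Adj u v → ∀ w : V, pos w ∉ arc u v '' Set.Ioo 0 1
  arc_meet : ∀ ⦃u v x y⦄, G.Adj u v → G.Adj x y → s(u, v) ≠ s(x, y) →
      arc u v '' Set.Icc 0 1 ∩ arc x y '' Set.Icc 0 1 ⊆
        ({pos u, pos v} : Set (ℝ × ℝ)) ∩ {pos x, pos y}

/-- A graph is planar if it admits a plane embedding. -/
def IsPlanar {V : Type*} (G : SimpleGraph V) : Prop :=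
  Nonempty (PlaneEmbedding G)

/-!
Join `r` to every vertex by a shortest path. Some two of these paths together form a separator
`S` leaving only components with fewer than two thirds of the vertices. Suppose not. Draw the graph
on a fine square grid and label every grid point by a shortest path from which it can be reached
without meeting the rest of the drawing. Any two labels leave a large component, and its winding
number with respect to the closed curve through the two paths is well defined. Three large
components always share a vertex, so on the triangles of the grid these winding numbers differ from
a coboundary by a cocycle. On the boundary of a large square that cocycle counts the crossings with
a ray, so its circulation is `1`, while it must be `0` by a discrete Stokes theorem.

The complement of `S` splits into two sides, each with fewer than two thirds of the vertices and not
adjacent to each other. As `S` consists of two geodesics, it has at most two vertices at each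
distance from `r`, so two firefighters per round protect every vertex of `S` at the last moment. In
the first round the remaining firefighters protect the neighbours of `r` on the side with fewer of
them, which confines the fire to `r` and the other side.
-/

/-! ## Discrete topology of the square grid -/

/-- `a` and `b` are joined by a walk of `G` all of whose vertices lie in `U`. -/
def ReachableIn {V : Type*} (G : SimpleGraph V) (U : Set V) (a b : V) : Prop :=
  ∃ p : G.Walk a b, ∀ x ∈ p.support, x ∈ U

namespace ReachableIn

variable {V W : Type*} {G : SimpleGraph V} {H : SimpleGraph W} {U U' : Set V} {a b c : V}

lemma refl (ha : a ∈ U) : ReachableIn G U a a :=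
  ⟨.nil, by simpa using ha⟩

lemma of_adj (h : G.Adj a b) (ha : a ∈ U) (hb : b ∈ U) : ReachableIn G U a b :=
  ⟨h.toWalk, by simp [ha, hb]⟩

lemma symm (h : ReachableIn G U a b) : ReachableIn G U b a := by
  obtain ⟨p, hp⟩ := h
  exact ⟨p.reverse, by simpa using hp⟩

lemma trans (h : ReachableIn G U a b) (h' : ReachableIn G U b c) : ReachableIn G U a c := by
  obtain ⟨p, hp⟩ := h
  obtain ⟨q, hq⟩ := h'
  refine ⟨p.append q, fun x hx => ?_⟩
  exact ((SimpleGraph.Walk.mem_support_append_iff p q).1 hx).elim (hp x) (hq x)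

lemma mono (hU : U ⊆ U') (h : ReachableIn G U a b) : ReachableIn G U' a b := by
  obtain ⟨p, hp⟩ := h
  exact ⟨p, fun x hx => hU (hp x hx)⟩

lemma mem_right (h : ReachableIn G U a b) : b ∈ U := by
  obtain ⟨p, hp⟩ := h
  exact hp b p.end_mem_support

lemma map {x y : W} (h : H.Reachable x y) (f : H →g G) (hf : ∀ z, f z ∈ U) :
    ReachableIn G U (f x) (f y) := by
  obtain ⟨p⟩ := h
  refine ⟨p.map f, fun z hz => ?_⟩
  obtain ⟨z, -, rfl⟩ := List.mem_map.1 (p.support_map f ▸ hz)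
  exact hf z

end ReachableIn

/-- The square grid on `ℤ × ℤ`, in which the discretised plane topology takes place. -/
noncomputable abbrev intGrid : SimpleGraph (ℤ × ℤ) := SimpleGraph.hasse (ℤ × ℤ)

/-- The edges of the triangulation of the square grid by the diagonals in direction `(1, 1)`,
oriented upwards and to the right. Loops are allowed. -/
def IsStep (h h' : ℤ × ℤ) : Prop := h ≤ h' ∧ h' ≤ h + 1

/-- The grid points strictly inside the square with corners `(±N, ±N)`. -/
def openBox (N : ℕ) : Set (ℤ × ℤ) := Set.Ioo (-N : ℤ) N ×ˢ Set.Ioo (-N : ℤ) N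

lemma isStep_iff {h h' : ℤ × ℤ} :
    IsStep h h' ↔ (h.1 ≤ h'.1 ∧ h.2 ≤ h'.2) ∧ h'.1 ≤ h.1 + 1 ∧ h'.2 ≤ h.2 + 1 := by
  simp [IsStep, Prod.le_def]

lemma eq_add_of_covBy {g g' : ℤ × ℤ} (h : g ⋖ g') : g' = g + (1, 0) ∨ g' = g + (0, 1) := by
  obtain ⟨x, y⟩ := g
  obtain ⟨x', y'⟩ := g'
  simp only [Prod.covBy_iff, Order.covBy_iff_add_one_eq] at h
  simp only [Prod.mk_add_mk, Prod.mk.injEq]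
  omega

lemma isStep_of_covBy {g g' : ℤ × ℤ} (h : g ⋖ g') : IsStep g g' := by
  rcases eq_add_of_covBy h with rfl | rfl <;> simp [isStep_iff]

lemma intGrid_preconnected : intGrid.Preconnected := by
  rw [intGrid, SimpleGraph.hasse_prod]
  exact (SimpleGraph.hasse_preconnected_of_succ ℤ).boxProd
    (SimpleGraph.hasse_preconnected_of_succ ℤ)

lemma reachableIn_row {U : Set (ℤ × ℤ)} {j : ℤ} (hU : ∀ i, (i, j) ∈ U) (i i' : ℤ) :
    ReachableIn intGrid U (i, j) (i', j) :=
  .map (SimpleGraph.hasse_preconnected_of_succ ℤ i i')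
    ⟨fun k => (k, j), fun h => h.imp Prod.mk_covBy_mk_iff_left.2 Prod.mk_covBy_mk_iff_left.2⟩ hU

lemma reachableIn_column {U : Set (ℤ × ℤ)} {i : ℤ} (hU : ∀ j, (i, j) ∈ U) (j j' : ℤ) :
    ReachableIn intGrid U (i, j) (i, j') :=
  .map (SimpleGraph.hasse_preconnected_of_succ ℤ j j')
    ⟨fun k => (i, k), fun h => h.imp Prod.mk_covBy_mk_iff_right.2 Prod.mk_covBy_mk_iff_right.2⟩ hU

lemma notMem_openBox_iff {N : ℕ} {h : ℤ × ℤ} :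
    h ∉ openBox N ↔ (N : ℤ) ≤ |h.1| ∨ (N : ℤ) ≤ |h.2| := by
  simp only [openBox, Set.mem_prod, Set.mem_Ioo, ← abs_lt, not_and_or, not_lt]

lemma reachableIn_compl_openBox {N : ℕ} {h : ℤ × ℤ} (hh : h ∉ openBox N) :
    ReachableIn intGrid (openBox N)ᶜ (N, N) h := by
  obtain ⟨i, j⟩ := h
  have row {j : ℤ} (hj : (N : ℤ) ≤ |j|) := reachableIn_row (U := (openBox N)ᶜ)
    fun i => notMem_openBox_iff.2 (Or.inr (by exact hj) : _ ∨ (N : ℤ) ≤ |(i, j).2|)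
  have column {i : ℤ} (hi : (N : ℤ) ≤ |i|) := reachableIn_column (U := (openBox N)ᶜ)
    fun j => notMem_openBox_iff.2 (Or.inl (by exact hi) : (N : ℤ) ≤ |(i, j).1| ∨ _)
  rcases notMem_openBox_iff.1 hh with hi | hj
  · exact (row (le_abs_self _) N i).trans (column hi N j)
  · exact (column (le_abs_self _) N j).trans (row hj N i)

/-- The grid points of the open ray from `g` to the right, as an indicator function. -/
def rayIndicator (g h : ℤ × ℤ) : ℤ := if h.2 = g.2 ∧ g.1 < h.1 then 1 else 0

/-- The signed number of crossings of the step from `h` to `h'` with the ray from `g` to the right,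
pushed slightly upwards so that it meets no grid point. -/
def crossing (g h h' : ℤ × ℤ) : ℤ :=
  (if (h.2 = g.2 ∧ g.1 < h.1) ∧ h'.2 = g.2 + 1 then 1 else 0) -
    (if (h'.2 = g.2 ∧ g.1 < h'.1) ∧ h.2 = g.2 + 1 then 1 else 0)

lemma crossing_swap (g h h' : ℤ × ℤ) : crossing g h' h = -crossing g h h' := by
  unfold crossing
  ring

lemma crossing_add_right {g h h' : ℤ × ℤ} (hs : IsStep h h') (hh : h ≠ g + (1, 0))
    (hh' : h' ≠ g + (1, 0)) : crossing (g + (1, 0)) h h' = crossing g h h' := by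
  simp only [isStep_iff, crossing, ne_eq, Prod.ext_iff, Prod.fst_add, Prod.snd_add] at *
  split_ifs <;> omega

lemma crossing_add_up {g h h' : ℤ × ℤ} (hs : IsStep h h') (hh : h ≠ g) (hh' : h' ≠ g)
    (hu : h ≠ g + (0, 1)) (hu' : h' ≠ g + (0, 1)) :
    crossing g h h' - crossing (g + (0, 1)) h h' =
      rayIndicator (g + (0, 1)) h' - rayIndicator (g + (0, 1)) h := by
  simp only [isStep_iff, crossing, rayIndicator, ne_eq, Prod.ext_iff, Prod.fst_add,
    Prod.snd_add] at *
  split_ifs <;> omega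

lemma crossing_add_crossing {g h₁ h₂ h₃ : ℤ × ℤ} (h₁₂ : IsStep h₁ h₂) (h₂₃ : IsStep h₂ h₃)
    (h₁₃ : IsStep h₁ h₃) (hg₁ : h₁ ≠ g) (hg₂ : h₂ ≠ g) (hg₃ : h₃ ≠ g) :
    crossing g h₁ h₂ + crossing g h₂ h₃ = crossing g h₁ h₃ := by
  simp only [isStep_iff, crossing, ne_eq, Prod.ext_iff] at *
  split_ifs <;> omega

/-- The signed number of crossings of the grid walk `p` with the ray from `g` to the right. -/
noncomputable def crossings (g : ℤ × ℤ) {a b : ℤ × ℤ} (p : intGrid.Walk a b) : ℤ :=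
  (p.darts.map fun d => crossing g d.fst d.snd).sum

lemma crossings_cons (g : ℤ × ℤ) {a b c : ℤ × ℤ} (h : intGrid.Adj a b) (p : intGrid.Walk b c) :
    crossings g (p.cons h) = crossing g a b + crossings g p := by
  simp [crossings]

lemma crossings_add_right {g a b : ℤ × ℤ} (p : intGrid.Walk a b)
    (hr : g + (1, 0) ∉ p.support) : crossings (g + (1, 0)) p = crossings g p := by
  induction p with
  | nil => rfl
  | @cons a b c h p ih =>
    simp only [SimpleGraph.Walk.support_cons, List.mem_cons, not_or] at hr
    have hb : b ≠ g + (1, 0) := fun e => hr.2 (e ▸ p.start_mem_support)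
    have edge : crossing (g + (1, 0)) a b = crossing g a b := by
      rcases h with h | h
      · exact crossing_add_right (isStep_of_covBy h) (Ne.symm hr.1) hb
      · rw [crossing_swap _ b a, crossing_swap g b a,
          crossing_add_right (isStep_of_covBy h) hb (Ne.symm hr.1)]
    rw [crossings_cons, crossings_cons, edge, ih hr.2]

lemma crossings_add_up {g a b : ℤ × ℤ} (p : intGrid.Walk a b) (hg : g ∉ p.support)
    (hu : g + (0, 1) ∉ p.support) :
    crossings g p - crossings (g + (0, 1)) p =
      rayIndicator (g + (0, 1)) b - rayIndicator (g + (0, 1)) a := by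
  induction p with
  | nil => simp [crossings]
  | @cons a b c h p ih =>
    simp only [SimpleGraph.Walk.support_cons, List.mem_cons, not_or] at hg hu
    have hb : b ≠ g := fun e => hg.2 (e ▸ p.start_mem_support)
    have hbu : b ≠ g + (0, 1) := fun e => hu.2 (e ▸ p.start_mem_support)
    have edge : crossing g a b - crossing (g + (0, 1)) a b =
        rayIndicator (g + (0, 1)) b - rayIndicator (g + (0, 1)) a := by
      rcases h with h | h
      · exact crossing_add_up (isStep_of_covBy h) (Ne.symm hg.1) hb (Ne.symm hu.1) hbu
      · have := crossing_add_up (isStep_of_covBy h) hb (Ne.symm hg.1) hbu (Ne.symm hu.1)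
        rw [crossing_swap g b a, crossing_swap _ b a]
        linarith
    rw [crossings_cons, crossings_cons]
    linarith [ih hg.2 hu.2]

/-- The winding number around `g` of the closed curve that follows `p`, the step from `h` to `h'`
and then `q` backwards. -/
noncomputable def winding (g : ℤ × ℤ) {o h h' : ℤ × ℤ} (p : intGrid.Walk o h)
    (q : intGrid.Walk o h') : ℤ :=
  crossings g p + crossing g h h' - crossings g q

section Winding

variable {o h h' g g' : ℤ × ℤ} {p : intGrid.Walk o h} {q : intGrid.Walk o h'}

lemma winding_eq_of_covBy (hs : IsStep h h') (hg : g ∉ p.support ∧ g ∉ q.support)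
    (hg' : g' ∉ p.support ∧ g' ∉ q.support) (hgg' : g ⋖ g') : winding g p q = winding g' p q := by
  have ne_of_mem {x y : ℤ × ℤ} {l : List (ℤ × ℤ)} (hx : x ∈ l) (hy : y ∉ l) : x ≠ y :=
    fun e => hy (e ▸ hx)
  have hh := ne_of_mem p.end_mem_support hg.1
  have hh' := ne_of_mem q.end_mem_support hg.2
  have kh := ne_of_mem p.end_mem_support hg'.1
  have kh' := ne_of_mem q.end_mem_support hg'.2
  unfold winding
  rcases eq_add_of_covBy hgg' with rfl | rfl
  · rw [crossings_add_right p hg'.1, crossings_add_right q hg'.2, crossing_add_right hs kh kh']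
  · linarith [crossings_add_up p hg.1 hg'.1, crossings_add_up q hg.2 hg'.2,
      crossing_add_up hs hh hh' kh kh']

lemma winding_eq_of_reachableIn (hs : IsStep h h')
    (hgg' : ReachableIn intGrid {x | x ∉ p.support ∧ x ∉ q.support} g g') :
    winding g p q = winding g' p q := by
  obtain ⟨c, hc⟩ := hgg'
  induction c with
  | nil => rfl
  | @cons a b _ hab c ih =>
    simp only [SimpleGraph.Walk.support_cons, List.forall_mem_cons] at hc
    have hb := hc.2 b c.start_mem_support
    rw [← ih hc.2]
    rcases hab with hab | hab
    · exact winding_eq_of_covBy hs hc.1 hb hab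
    · exact (winding_eq_of_covBy hs hb hc.1 hab).symm

end Winding

/-- Additivity of `f` on the triangles of the triangulated grid. -/
def IsCocycle (f : ℤ × ℤ → ℤ × ℤ → ℤ) : Prop :=
  ∀ ⦃h₁ h₂ h₃⦄, IsStep h₁ h₂ → IsStep h₂ h₃ → IsStep h₁ h₃ → f h₁ h₂ + f h₂ h₃ = f h₁ h₃

/-- The sum of `f` counterclockwise around the rectangle with lower left corner `(x, y)`, width `m`
and height `n`, where edges traversed against their orientation count negatively. -/
def circulation (f : ℤ × ℤ → ℤ × ℤ → ℤ) (x y : ℤ) (m n : ℕ) : ℤ :=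
  ∑ i ∈ Finset.range m, f (x + i, y) (x + i + 1, y) +
    ∑ j ∈ Finset.range n, f (x + m, y + j) (x + m, y + j + 1) -
    ∑ i ∈ Finset.range m, f (x + i, y + n) (x + i + 1, y + n) -
    ∑ j ∈ Finset.range n, f (x, y + j) (x, y + j + 1)

lemma IsCocycle.unit_square {f : ℤ × ℤ → ℤ × ℤ → ℤ} (hf : IsCocycle f) (i j : ℤ) :
    f (i, j) (i + 1, j) + f (i + 1, j) (i + 1, j + 1) =
      f (i, j) (i, j + 1) + f (i, j + 1) (i + 1, j + 1) := by
  rw [hf (h₁ := (i, j)), hf (h₁ := (i, j))] <;> simp [isStep_iff]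

lemma IsCocycle.circulation_eq_zero {f : ℤ × ℤ → ℤ × ℤ → ℤ} (hf : IsCocycle f) (x y : ℤ)
    (m n : ℕ) : circulation f x y m n = 0 := by
  have row (m : ℕ) (y : ℤ) : ∑ i ∈ Finset.range m, f (x + i, y) (x + i + 1, y) +
      f (x + m, y) (x + m, y + 1) = f (x, y) (x, y + 1) +
      ∑ i ∈ Finset.range m, f (x + i, y + 1) (x + i + 1, y + 1) := by
    induction m with
    | zero => simp
    | succ m ih =>
      rw [Finset.sum_range_succ, Finset.sum_range_succ]
      push_cast
      rw [← add_assoc x]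
      linarith [hf.unit_square (x + m) y]
  unfold circulation
  induction n with
  | zero => simp
  | succ n ih =>
    rw [Finset.sum_range_succ, Finset.sum_range_succ]
    push_cast
    rw [← add_assoc y]
    linarith [row m (y + n)]

lemma circulation_crossing {g : ℤ × ℤ} {x y : ℤ} {m n : ℕ} (hx : g.1 ∈ Set.Ico x (x + m))
    (hy : g.2 ∈ Set.Ico y (y + n)) : circulation (crossing g) x y m n = 1 := by
  rw [Set.mem_Ico] at hx hy
  have horizontal (i j : ℤ) : crossing g (i, j) (i + 1, j) = 0 := by
    simp only [crossing]
    split_ifs <;> omega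
  have left (j : ℤ) : crossing g (x, j) (x, j + 1) = 0 := by
    simp only [crossing]
    split_ifs <;> omega
  have right (j : ℕ) : crossing g (x + m, y + j) (x + m, y + j + 1) =
      if (g.2 - y).toNat = j then 1 else 0 := by
    simp only [crossing]
    split_ifs <;> omega
  have hmem : (g.2 - y).toNat ∈ Finset.range n := by
    rw [Finset.mem_range]
    omega
  simp only [circulation, horizontal, left, right, Finset.sum_const_zero, Finset.sum_ite_eq, hmem]
  norm_num

lemma circulation_congr {f f' : ℤ × ℤ → ℤ × ℤ → ℤ} {N : ℕ}
    (hf : ∀ h h', IsStep h h' → h ∉ openBox N → h' ∉ openBox N → f h h' = f' h h') :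
    circulation f (-N) (-N) (2 * N) (2 * N) = circulation f' (-N) (-N) (2 * N) (2 * N) := by
  have corner : (-N + (2 * N : ℕ) : ℤ) = N := by
    push_cast
    ring
  have horizontal {j : ℤ} (hj : |j| = N) (i : ℤ) : f (i, j) (i + 1, j) = f' (i, j) (i + 1, j) :=
    hf _ _ (by simp [isStep_iff]) (notMem_openBox_iff.2 (Or.inr hj.ge))
      (notMem_openBox_iff.2 (Or.inr hj.ge))
  have vertical {i : ℤ} (hi : |i| = N) (j : ℤ) : f (i, j) (i, j + 1) = f' (i, j) (i, j + 1) :=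
    hf _ _ (by simp [isStep_iff]) (notMem_openBox_iff.2 (Or.inl hi.ge))
      (notMem_openBox_iff.2 (Or.inl hi.ge))
  simp only [circulation, corner, horizontal (Nat.abs_cast N), vertical (Nat.abs_cast N),
    horizontal ((abs_neg _).trans (Nat.abs_cast N)), vertical ((abs_neg _).trans (Nat.abs_cast N))]

lemma IsCocycle.false_of_eq_crossing {f : ℤ × ℤ → ℤ × ℤ → ℤ} (hf : IsCocycle f) {N : ℕ}
    {g : ℤ × ℤ} (hg : g ∈ openBox N)
    (hfg : ∀ h h', IsStep h h' → h ∉ openBox N → h' ∉ openBox N → f h h' = crossing g h h') :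
    False := by
  obtain ⟨⟨hx, hx'⟩, hy, hy'⟩ := hg
  have one : circulation (crossing g) (-N) (-N) (2 * N) (2 * N) = 1 :=
    circulation_crossing ⟨hx.le, by push_cast; linarith⟩ ⟨hy.le, by push_cast; linarith⟩
  rw [← circulation_congr hfg, hf.circulation_eq_zero] at one
  exact zero_ne_one one

theorem exists_triangle_inter_eq_empty {o g₀ : ℤ × ℤ} {N : ℕ} (w : ∀ h, intGrid.Walk o h)
    (K : ℤ × ℤ → ℤ × ℤ → Set (ℤ × ℤ))
    (hK : ∀ h h', IsStep h h' → ∀ g ∈ K h h', ∀ g' ∈ K h h',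
      ReachableIn intGrid {x | x ∉ (w h).support ∧ x ∉ (w h').support} g g')
    (hg₀ : g₀ ∈ openBox N)
    (hext : ∀ h h', IsStep h h' → h ∉ openBox N → h' ∉ openBox N → g₀ ∈ K h h') :
    ∃ h₁ h₂ h₃, IsStep h₁ h₂ ∧ IsStep h₂ h₃ ∧ IsStep h₁ h₃ ∧
      K h₁ h₂ ∩ K h₂ h₃ ∩ K h₁ h₃ = ∅ := by
  by_contra! hmeet
  have hne (h h') (hs : IsStep h h') : (K h h').Nonempty := by
    have := hmeet h h h' (by simp [isStep_iff]) hs hs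
    exact this.mono Set.inter_subset_right
  choose! c hc using hne
  have winding_c {h h' g} (hs : IsStep h h') (hg : g ∈ K h h') :
      winding (c h h') (w h) (w h') = winding g (w h) (w h') :=
    winding_eq_of_reachableIn hs (hK h h' hs _ (hc h h' hs) g hg)
  let f : ℤ × ℤ → ℤ × ℤ → ℤ := fun h h' =>
    winding (c h h') (w h) (w h') - (crossings g₀ (w h) - crossings g₀ (w h'))
  have hf : IsCocycle f := by
    intro h₁ h₂ h₃ h₁₂ h₂₃ h₁₃
    obtain ⟨g, ⟨hg₁₂, hg₂₃⟩, hg₁₃⟩ := hmeet h₁ h₂ h₃ h₁₂ h₂₃ h₁₃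
    have off₁₃ := (hK h₁ h₃ h₁₃ g hg₁₃ g hg₁₃).mem_right
    have off₁₂ := (hK h₁ h₂ h₁₂ g hg₁₂ g hg₁₂).mem_right
    have ne_of_off {h} (hg : g ∉ (w h).support) : h ≠ g := fun e => hg (e ▸ (w h).end_mem_support)
    have := crossing_add_crossing h₁₂ h₂₃ h₁₃ (ne_of_off off₁₃.1) (ne_of_off off₁₂.2)
      (ne_of_off off₁₃.2)
    simp only [f]
    rw [winding_c h₁₂ hg₁₂, winding_c h₂₃ hg₂₃, winding_c h₁₃ hg₁₃]
    unfold winding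
    linarith
  refine hf.false_of_eq_crossing hg₀ fun h h' hs hh hh' => ?_
  simp only [f]
  rw [winding_c hs (hext h h' hs hh hh')]
  unfold winding
  ring

/-! ## Balanced separators -/

section Separator

variable {V : Type*} {G : SimpleGraph V}

/-- `S` is a balanced separator of `G` if every component of `G - S` has fewer than two thirds of
the vertices of `G`. -/
def IsBalancedSeparator (G : SimpleGraph V) (S : Set V) : Prop :=
  ∀ C : (G.induce Sᶜ).ConnectedComponent, 3 * C.supp.ncard < 2 * Nat.card V

/-- A discrete plane drawing of `G`: each vertex `v` is represented by a connected set `region v` of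
grid points, which contains a point that lies in no other region, and the points of adjacent
vertices are joined within their two regions by a path that avoids all other regions. Regions of
adjacent vertices may overlap. -/
structure GridModel (G : SimpleGraph V) where
  region : V → Set (ℤ × ℤ)
  point : V → ℤ × ℤ
  bound : ℕ
  region_subset : ∀ v, region v ⊆ openBox bound
  point_mem : ∀ v, point v ∈ region v
  point_notMem : ∀ ⦃v y⦄, y ≠ v → point v ∉ region y
  reachableIn_region : ∀ ⦃v h⦄, h ∈ region v → ReachableIn intGrid (region v) (point v) h
  link : ∀ ⦃v w⦄, G.Adj v w → ∃ L ⊆ region v ∪ region w,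
    (∀ y, y ≠ v → y ≠ w → Disjoint L (region y)) ∧ ReachableIn intGrid L (point v) (point w)

namespace GridModel

variable (M : GridModel G)

/-- The grid points that lie in no region, or in the region of a vertex of `S`. -/
def zone (S : Set V) : Set (ℤ × ℤ) := (⋃ v, M.region v)ᶜ ∪ ⋃ v ∈ S, M.region v

lemma zone_mono {S T : Set V} (h : S ⊆ T) : M.zone S ⊆ M.zone T :=
  Set.union_subset_union_right _ (Set.biUnion_subset_biUnion_left h)

lemma compl_openBox_subset_zone (S : Set V) : (openBox M.bound)ᶜ ⊆ M.zone S :=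
  (Set.compl_subset_compl.2 (Set.iUnion_subset M.region_subset)).trans Set.subset_union_left

lemma notMem_zone {S : Set V} {g : ℤ × ℤ} {v : V} (hg : g ∈ M.region v)
    (hS : ∀ y ∈ S, g ∉ M.region y) : g ∉ M.zone S := by
  rintro (h | h)
  · exact h (Set.mem_iUnion_of_mem v hg)
  · obtain ⟨y, hy, hgy⟩ := Set.mem_iUnion₂.1 h
    exact hS y hy hgy

lemma point_notMem_zone {S : Set V} {v : V} (hv : v ∉ S) : M.point v ∉ M.zone S :=
  M.notMem_zone (M.point_mem v) fun _ hy => M.point_notMem (ne_of_mem_of_not_mem hy hv)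

lemma reachableIn_of_walk {u x : V} (p : G.Walk u x) {h : ℤ × ℤ} (hh : h ∈ M.region x) :
    ReachableIn intGrid (⋃ y ∈ {z | z ∈ p.support}, M.region y) (M.point u) h := by
  induction p with
  | nil =>
    exact (M.reachableIn_region hh).mono (Set.subset_biUnion_of_mem (u := M.region) (by simp))
  | @cons u v x hadj p ih =>
    obtain ⟨L, hL, -, hreach⟩ := M.link hadj
    refine (hreach.mono (hL.trans (Set.union_subset ?_ ?_))).trans ((ih hh).mono ?_)
    · exact Set.subset_biUnion_of_mem (u := M.region) (by simp)
    · exact Set.subset_biUnion_of_mem (u := M.region) (by simp)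
    · exact Set.biUnion_subset_biUnion_left fun y hy => by simp_all

lemma reachableIn_compl_zone {T : Set V} {a b : ↥(Tᶜ)} (h : (G.induce Tᶜ).Reachable a b) :
    ReachableIn intGrid (M.zone T)ᶜ (M.point a) (M.point b) := by
  obtain ⟨p⟩ := h
  induction p with
  | @nil v => exact .refl (M.point_notMem_zone v.2)
  | @cons v w _ hadj _ ih =>
    obtain ⟨L, hL, hdisj, hreach⟩ := M.link (SimpleGraph.induce_adj.1 hadj)
    refine (hreach.mono fun g hg => ?_).trans ih
    have off (y : V) (hy : y ∈ T) : g ∉ M.region y :=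
      Set.disjoint_left.1 (hdisj y (ne_of_mem_of_not_mem hy v.2) (ne_of_mem_of_not_mem hy w.2)) hg
    exact (hL hg).elim (M.notMem_zone · off) (M.notMem_zone · off)

variable {r : V} (p : ∀ x, G.Walk r x)

lemma exists_reachableIn_zone (h : ℤ × ℤ) :
    ∃ x, ReachableIn intGrid (M.zone {z | z ∈ (p x).support}) (M.point r) h := by
  obtain ⟨q⟩ := intGrid_preconnected h (M.point r)
  generalize ho : M.point r = o at q ⊢
  induction q with
  | nil => exact ⟨r, .refl (Or.inr (Set.mem_biUnion (p r).start_mem_support (ho ▸ M.point_mem r)))⟩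
  | @cons h g _ hadj _ ih =>
    by_cases hh : h ∈ ⋃ v, M.region v
    · obtain ⟨x, hx⟩ := Set.mem_iUnion.1 hh
      exact ⟨x, ho ▸ (M.reachableIn_of_walk (p x) hx).mono Set.subset_union_right⟩
    · obtain ⟨x, hx⟩ := ih ho
      exact ⟨x, hx.trans (.of_adj hadj.symm hx.mem_right (Or.inl hh))⟩

lemma exists_label : ∃ (label : ℤ × ℤ → V) (x₀ : V) (w : ∀ h, intGrid.Walk (M.point r) h),
    (∀ h, ∀ g ∈ (w h).support, g ∈ M.zone {z | z ∈ (p (label h)).support}) ∧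
      ∀ h ∉ openBox M.bound, label h = x₀ := by
  obtain ⟨x₀, hx₀⟩ := M.exists_reachableIn_zone p (M.bound, M.bound)
  have key (h : ℤ × ℤ) : ∃ x, (h ∉ openBox M.bound → x = x₀) ∧
      ReachableIn intGrid (M.zone {z | z ∈ (p x).support}) (M.point r) h := by
    by_cases hh : h ∈ openBox M.bound
    · obtain ⟨x, hx⟩ := M.exists_reachableIn_zone p h
      exact ⟨x, fun hh' => (hh' hh).elim, hx⟩
    · exact ⟨x₀, fun _ => rfl, hx₀.trans
        ((reachableIn_compl_openBox hh).mono (M.compl_openBox_subset_zone _))⟩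
  choose label hlabel w hw using key
  exact ⟨label, x₀, w, hw, hlabel⟩

end GridModel

lemma nonempty_inter_inter {α : Type*} {A B C X : Set α} (hX : X.Finite) (hA : A ⊆ X) (hB : B ⊆ X)
    (hC : C ⊆ X) (h : 2 * X.ncard < A.ncard + B.ncard + C.ncard) : (A ∩ B ∩ C).Nonempty := by
  have hAB := Set.ncard_union_add_ncard_inter A B (hX.subset hA) (hX.subset hB)
  have hABC := Set.ncard_union_add_ncard_inter (A ∩ B) C
    ((hX.subset hA).subset Set.inter_subset_left) (hX.subset hC)
  have hAB' := Set.ncard_le_ncard (Set.union_subset hA hB) hX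
  have hABC' := Set.ncard_le_ncard
    (Set.union_subset (Set.inter_subset_left.trans hA : A ∩ B ⊆ X) hC) hX
  refine Set.nonempty_of_ncard_ne_zero ?_
  omega

theorem GridModel.exists_isBalancedSeparator [Finite V] (M : GridModel G) {r : V}
    (p : ∀ x, G.Walk r x) : ∃ x y,
      IsBalancedSeparator G ({z | z ∈ (p x).support} ∪ {z | z ∈ (p y).support}) := by
  by_contra! hcon
  simp only [IsBalancedSeparator, not_forall, not_lt] at hcon
  choose C hC using hcon
  let K (x y : V) : Set V := Subtype.val '' (C x y).supp
  have card_K (x y : V) : 2 * Nat.card V ≤ 3 * (K x y).ncard := by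
    simpa only [K, Set.ncard_image_of_injective _ Subtype.val_injective] using hC x y
  have K_subset (x y : V) : K x y ⊆ {r}ᶜ := by
    rintro _ ⟨a, -, rfl⟩ har
    have start : r ∈ (p x).support := (p x).start_mem_support
    exact a.2 (Or.inl (by rwa [Set.mem_singleton_iff.1 har]))
  have K_inter (x y z : V) : (K x y ∩ K y z ∩ K x z).Nonempty := by
    refine nonempty_inter_inter (Set.toFinite {r}ᶜ) (K_subset x y) (K_subset y z) (K_subset x z) ?_
    have := Set.ncard_add_ncard_compl {r}
    have := card_K x y
    have := card_K y z
    have := card_K x z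
    rw [Set.ncard_singleton] at *
    omega
  obtain ⟨label, x₀, w, hw, hlabel⟩ := M.exists_label p
  obtain ⟨v₀, -, hv₀⟩ := K_inter x₀ x₀ x₀
  obtain ⟨h₁, h₂, h₃, -, -, -, hempty⟩ := exists_triangle_inter_eq_empty w
    (fun h h' => M.point '' K (label h) (label h'))
    (fun h h' _ => by
      rintro _ ⟨_, ⟨a, ha, rfl⟩, rfl⟩ _ ⟨_, ⟨b, hb, rfl⟩, rfl⟩
      have hab := SimpleGraph.ConnectedComponent.exact (ha.trans hb.symm)
      refine .mono (fun g hg => ?_) (M.reachableIn_compl_zone hab)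
      exact ⟨fun hgh => hg (M.zone_mono Set.subset_union_left (hw h g hgh)),
        fun hgh => hg (M.zone_mono Set.subset_union_right (hw h' g hgh))⟩)
    (M.region_subset v₀ (M.point_mem v₀))
    (fun h h' _ hh hh' => ⟨v₀, by rwa [hlabel h hh, hlabel h' hh'], rfl⟩)
  obtain ⟨v, ⟨hv₁₂, hv₂₃⟩, hv₁₃⟩ := K_inter (label h₁) (label h₂) (label h₃)
  exact Set.notMem_empty _
    (hempty.subset ⟨⟨⟨v, hv₁₂, rfl⟩, v, hv₂₃, rfl⟩, v, hv₁₃, rfl⟩)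

lemma exists_balanced_preimage {α ι : Type*} [Finite α] [Finite ι] (f : α → ι) {n : ℕ}
    (hn : Nat.card α < n) (hf : ∀ i, 3 * (f ⁻¹' {i}).ncard < 2 * n) :
    ∃ T : Set ι, 3 * (f ⁻¹' T).ncard < 2 * n ∧ 3 * (f ⁻¹' Tᶜ).ncard < 2 * n := by
  obtain ⟨T, hT, hmax⟩ := Set.exists_max_image {T : Set ι | 3 * (f ⁻¹' T).ncard < 2 * n}
    (fun T => (f ⁻¹' T).ncard) (Set.toFinite _) ⟨∅, by simp; omega⟩
  refine ⟨T, hT, ?_⟩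
  by_contra! hlarge
  have total := Set.ncard_add_ncard_compl (f ⁻¹' T)
  rw [← Set.preimage_compl] at total
  obtain ⟨a, ha⟩ : (f ⁻¹' Tᶜ).Nonempty := by
    rw [← Set.ncard_pos]
    omega
  have union_le : (f ⁻¹' insert (f a) T).ncard ≤ (f ⁻¹' {f a}).ncard + (f ⁻¹' T).ncard :=
    Set.ncard_union_le _ _
  have lt_insert : (f ⁻¹' T).ncard < (f ⁻¹' insert (f a) T).ncard :=
    Set.ncard_lt_ncard ⟨Set.preimage_mono (Set.subset_insert _ _),
      fun h => ha (h (Set.mem_insert (f a) T))⟩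
  have fiber_le : (f ⁻¹' {f a}).ncard ≤ (f ⁻¹' T).ncard := hmax _ (hf (f a))
  have insert_le : 3 * (f ⁻¹' insert (f a) T).ncard < 2 * n := by omega
  exact (hmax _ insert_le).not_gt lt_insert

lemma IsBalancedSeparator.exists_partition [Finite V] {S : Set V} (hS : IsBalancedSeparator G S)
    (hne : S.Nonempty) : ∃ A B, Disjoint A B ∧ A ∪ B = Sᶜ ∧ (∀ a ∈ A, ∀ b ∈ B, ¬G.Adj a b) ∧
      3 * A.ncard < 2 * Nat.card V ∧ 3 * B.ncard < 2 * Nat.card V := by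
  have card_lt : Nat.card ↥(Sᶜ) < Nat.card V := by
    have := Set.ncard_add_ncard_compl S
    have := (Set.ncard_pos).2 hne
    rw [Nat.card_coe_set_eq]
    omega
  obtain ⟨T, hT, hT'⟩ := exists_balanced_preimage (G.induce Sᶜ).connectedComponentMk card_lt hS
  refine ⟨_, _, ?_, ?_, ?_, (Set.ncard_image_of_injective _ Subtype.val_injective).symm ▸ hT,
    (Set.ncard_image_of_injective _ Subtype.val_injective).symm ▸ hT'⟩
  · rw [Set.disjoint_image_iff Subtype.val_injective]
    exact disjoint_compl_right.preimage _
  · rw [← Set.image_union, Set.preimage_compl, Set.union_compl_self, Set.image_univ,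
      Subtype.range_coe]
  · rintro _ ⟨a, ha, rfl⟩ _ ⟨b, hb, rfl⟩ hab
    have hcomp := SimpleGraph.ConnectedComponent.connectedComponentMk_eq_of_adj
      (SimpleGraph.induce_adj.2 hab : (G.induce Sᶜ).Adj a b)
    exact hb (hcomp ▸ ha : _ ∈ T)

end Separator

/-! ## Discretisation of a plane embedding -/

section Discretisation

open Filter Topology Set

/-- The point of the square grid of mesh `ε` in the plane with index `h`. -/
def gridPoint (ε : ℝ) (h : ℤ × ℤ) : ℝ × ℝ := (ε * h.1, ε * h.2)

/-- The discretisation of `K`: the grid points of mesh `ε` at (sup norm) distance less than `ε`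
from `K`. -/
def gridNhd (ε : ℝ) (K : Set (ℝ × ℝ)) : Set (ℤ × ℤ) := gridPoint ε ⁻¹' Metric.thickening ε K

variable {ε : ℝ} {K K' : Set (ℝ × ℝ)} {k : ℝ × ℝ} {h h' : ℤ × ℤ}

lemma dist_gridPoint_lt_iff :
    dist (gridPoint ε h) k < ε ↔ |ε * h.1 - k.1| < ε ∧ |ε * h.2 - k.2| < ε :=
  max_lt_iff

lemma exists_dist_gridPoint_lt (hε : 0 < ε) (k : ℝ × ℝ) : ∃ h, dist (gridPoint ε h) k < ε := by
  have floor_near (x : ℝ) : |ε * ⌊x / ε⌋ - x| < ε := by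
    have lower := (le_div_iff₀ hε).1 (Int.floor_le (x / ε))
    have upper := (div_lt_iff₀ hε).1 (Int.lt_floor_add_one (x / ε))
    rw [abs_lt]
    constructor <;> linarith
  exact ⟨(⌊k.1 / ε⌋, ⌊k.2 / ε⌋), dist_gridPoint_lt_iff.2 ⟨floor_near _, floor_near _⟩⟩

lemma mem_gridNhd_of_dist_lt (hk : k ∈ K) (hh : dist (gridPoint ε h) k < ε) : h ∈ gridNhd ε K :=
  Metric.mem_thickening_iff.2 ⟨k, hk, hh⟩

lemma gridNhd_mono (hK : K ⊆ K') : gridNhd ε K ⊆ gridNhd ε K' :=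
  preimage_mono (Metric.thickening_subset_of_subset ε hK)

lemma gridNhd_union : gridNhd ε (K ∪ K') = gridNhd ε K ∪ gridNhd ε K' := by
  simp only [gridNhd, Metric.thickening_union, preimage_union]

lemma eq_or_hasse_adj_of_abs_sub_lt {i i' : ℤ} {x : ℝ} (hi : |ε * i - x| < ε)
    (hi' : |ε * i' - x| < ε) : i = i' ∨ (SimpleGraph.hasse ℤ).Adj i i' := by
  have hε : 0 < ε := (abs_nonneg _).trans_lt hi
  rw [abs_lt] at hi hi'
  have lt : i < i' + 2 := by
    have := lt_of_mul_lt_mul_left (by linarith : ε * i < ε * (i' + 2)) hε.le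
    exact_mod_cast this
  have gt : i' < i + 2 := by
    have := lt_of_mul_lt_mul_left (by linarith : ε * i' < ε * (i + 2)) hε.le
    exact_mod_cast this
  rw [SimpleGraph.hasse_adj, Order.covBy_iff_add_one_eq, Order.covBy_iff_add_one_eq]
  omega

lemma reachableIn_gridNhd_of_dist_lt (hk : k ∈ K) (hh : dist (gridPoint ε h) k < ε)
    (hh' : dist (gridPoint ε h') k < ε) : ReachableIn intGrid (gridNhd ε K) h h' := by
  obtain ⟨i, j⟩ := h
  obtain ⟨i', j'⟩ := h'
  have hij := mem_gridNhd_of_dist_lt hk hh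
  have hij' := mem_gridNhd_of_dist_lt hk hh'
  rw [dist_gridPoint_lt_iff] at hh hh'
  have corner : (i, j') ∈ gridNhd ε K :=
    mem_gridNhd_of_dist_lt hk (dist_gridPoint_lt_iff.2 ⟨hh.1, hh'.2⟩)
  have vertical : ReachableIn intGrid (gridNhd ε K) (i, j) (i, j') := by
    rcases eq_or_hasse_adj_of_abs_sub_lt hh.2 hh'.2 with rfl | hj
    · exact .refl hij
    · exact .of_adj (hj.imp Prod.mk_covBy_mk_iff_right.2 Prod.mk_covBy_mk_iff_right.2) hij corner
  have horizontal : ReachableIn intGrid (gridNhd ε K) (i, j') (i', j') := by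
    rcases eq_or_hasse_adj_of_abs_sub_lt hh.1 hh'.1 with rfl | hi
    · exact .refl hij'
    · exact .of_adj (hi.imp Prod.mk_covBy_mk_iff_left.2 Prod.mk_covBy_mk_iff_left.2) corner hij'
  exact vertical.trans horizontal

lemma reachableIn_gridNhd (hε : 0 < ε) (hK : IsPreconnected K) (hh : h ∈ gridNhd ε K)
    (hh' : h' ∈ gridNhd ε K) : ReachableIn intGrid (gridNhd ε K) h h' := by
  by_contra hno
  let near (A : Set (ℤ × ℤ)) : Set (ℝ × ℝ) := ⋃ g ∈ A, Metric.ball (gridPoint ε g) ε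
  have mem_near {A : Set (ℤ × ℤ)} {m : ℝ × ℝ} :
      m ∈ near A ↔ ∃ g ∈ A, dist (gridPoint ε g) m < ε := by
    simp [near, dist_comm]
  have isOpen_near (A : Set (ℤ × ℤ)) : IsOpen (near A) :=
    isOpen_biUnion fun _ _ => Metric.isOpen_ball
  let reached : Set (ℤ × ℤ) := {g | ReachableIn intGrid (gridNhd ε K) h g}
  have cover : K ⊆ near reached ∪ near reachedᶜ := fun m _ => by
    obtain ⟨g, hg⟩ := exists_dist_gridPoint_lt hε m
    exact (em (g ∈ reached)).imp (fun hr => mem_near.2 ⟨g, hr, hg⟩) fun hr => mem_near.2 ⟨g, hr, hg⟩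
  obtain ⟨k, hk, hd⟩ := Metric.mem_thickening_iff.1 hh
  obtain ⟨k', hk', hd'⟩ := Metric.mem_thickening_iff.1 hh'
  obtain ⟨m, hm, hreached, hunreached⟩ := hK _ _ (isOpen_near _) (isOpen_near _) cover
    ⟨k, hk, mem_near.2 ⟨h, .refl hh, hd⟩⟩ ⟨k', hk', mem_near.2 ⟨h', hno, hd'⟩⟩
  obtain ⟨g, hg, hgm⟩ := mem_near.1 hreached
  obtain ⟨g', hg', hgm'⟩ := mem_near.1 hunreached
  exact hg' (hg.trans (reachableIn_gridNhd_of_dist_lt hm hgm hgm'))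

lemma eventually_disjoint_gridNhd (hK : IsCompact K) (hK' : IsCompact K') (hd : Disjoint K K') :
    ∀ᶠ ε in 𝓝[>] (0 : ℝ), Disjoint (gridNhd ε K) (gridNhd ε K') := by
  obtain ⟨δ, hδ, hdisj⟩ := hd.exists_thickenings hK hK'.isClosed
  filter_upwards [Ioo_mem_nhdsGT hδ] with ε hε
  exact (hdisj.mono (Metric.thickening_mono hε.2.le K)
    (Metric.thickening_mono hε.2.le K')).preimage _

lemma exists_gridNhd_subset_openBox (hε : 0 < ε) (hK : Bornology.IsBounded K) :
    ∃ N : ℕ, gridNhd ε K ⊆ openBox N := by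
  obtain ⟨M, hM⟩ := hK.exists_norm_le
  obtain ⟨N, hN⟩ := exists_nat_gt ((M + ε) / ε)
  rw [div_lt_iff₀ hε] at hN
  have coord {i : ℤ} {x : ℝ} (hi : |ε * i - x| < ε) (hx : |x| ≤ M) : i ∈ Ioo (-N : ℤ) N := by
    rw [abs_lt] at hi
    rw [abs_le] at hx
    have lower := lt_of_mul_lt_mul_left (by linarith : ε * -(N : ℝ) < ε * i) hε.le
    have upper := lt_of_mul_lt_mul_left (by linarith : ε * (i : ℝ) < ε * N) hε.le
    exact ⟨by exact_mod_cast lower, by exact_mod_cast upper⟩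
  refine ⟨N, fun h hh => ?_⟩
  obtain ⟨k, hk, hd⟩ := Metric.mem_thickening_iff.1 hh
  rw [dist_gridPoint_lt_iff] at hd
  exact ⟨coord hd.1 ((norm_fst_le k).trans (hM k hk)),
    coord hd.2 ((norm_snd_le k).trans (hM k hk))⟩

end Discretisation

section PlaneEmbedding

open Filter Topology Set

variable {V : Type*} {G : SimpleGraph V}

namespace PlaneEmbedding

variable (E : PlaneEmbedding G) {v w x y : V}

/-- The point of the vertex `x` together with the halves at `x` of the arcs that leave it. -/
def star (x : V) : Set (ℝ × ℝ) :=
  insert (E.pos x) (⋃ (y) (_ : G.Adj x y), E.arc x y '' Icc 0 (1 / 2))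

lemma pos_mem_star (x : V) : E.pos x ∈ E.star x := mem_insert _ _

lemma image_arc_subset_star (h : G.Adj x y) : E.arc x y '' Icc 0 (1 / 2) ⊆ E.star x :=
  fun _ hp => Or.inr (mem_iUnion₂.2 ⟨y, h, hp⟩)

lemma isCompact_star [Finite V] (x : V) : IsCompact (E.star x) := by
  refine IsCompact.insert (isCompact_iUnion fun y => isCompact_iUnion fun h => ?_) _
  exact isCompact_Icc.image (E.arc_cont h)

lemma isPreconnected_star (x : V) : IsPreconnected (E.star x) := by
  refine isPreconnected_of_forall (E.pos x) fun p hp => ?_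
  rcases hp with rfl | hp
  · exact ⟨{E.pos x}, singleton_subset_iff.2 (E.pos_mem_star x), rfl, rfl,
      isPreconnected_singleton⟩
  · obtain ⟨y, hy, hp⟩ := mem_iUnion₂.1 hp
    exact ⟨_, E.image_arc_subset_star hy, ⟨0, by norm_num, E.arc_zero hy⟩, hp,
      isPreconnected_Icc.image _ (E.arc_cont hy).continuousOn⟩

lemma image_arc_subset_star_union (h : G.Adj x y) :
    E.arc x y '' Icc 0 1 ⊆ E.star x ∪ E.star y := by
  rintro _ ⟨t, ⟨h₀, h₁⟩, rfl⟩
  rcases le_total t (1 / 2) with ht | ht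
  · exact Or.inl (E.image_arc_subset_star h ⟨t, ⟨h₀, ht⟩, rfl⟩)
  · exact Or.inr (E.image_arc_subset_star h.symm
      ⟨1 - t, ⟨by linarith, by linarith⟩, by rw [E.arc_symm h, sub_sub_cancel]⟩)

lemma pos_notMem_image_arc (h : G.Adj v w) (hv : y ≠ v) (hw : y ≠ w) :
    E.pos y ∉ E.arc v w '' Icc 0 1 := by
  rw [← Ioo_union_both zero_le_one, image_union, image_pair, E.arc_zero h, E.arc_one h]
  rintro (hy | hy | hy)
  · exact E.arc_avoid h y hy
  · exact hv (E.pos_inj hy)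
  · exact hw (E.pos_inj hy)

lemma pos_notMem_star (h : y ≠ v) : E.pos v ∉ E.star y := by
  rintro (hp | hp)
  · exact h (E.pos_inj hp).symm
  · obtain ⟨z, hz, t, ⟨h₀, h₁⟩, ht⟩ := mem_iUnion₂.1 hp
    rcases h₀.eq_or_lt with rfl | h₀
    · rw [E.arc_zero hz] at ht
      exact h (E.pos_inj ht)
    · exact E.arc_avoid hz v ⟨t, ⟨h₀, by linarith⟩, ht⟩

lemma disjoint_image_arc_star (h : G.Adj v w) (hv : y ≠ v) (hw : y ≠ w) :
    Disjoint (E.arc v w '' Icc 0 1) (E.star y) := by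
  rw [disjoint_left]
  rintro p hp (rfl | hq)
  · exact E.pos_notMem_image_arc h hv hw hp
  · obtain ⟨z, hz, hq⟩ := mem_iUnion₂.1 hq
    have hne : s(v, w) ≠ s(y, z) := fun e => by
      have := Sym2.mem_iff.1 (e ▸ Sym2.mem_mk_left y z : y ∈ s(v, w))
      tauto
    have half : Icc (0 : ℝ) (1 / 2) ⊆ Icc 0 1 := Icc_subset_Icc_right (by norm_num)
    rcases (E.arc_meet h hz hne ⟨hp, image_mono half hq⟩).1 with rfl | rfl
    · exact E.pos_notMem_star hv (E.image_arc_subset_star hz hq)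
    · exact E.pos_notMem_star hw (E.image_arc_subset_star hz hq)

end PlaneEmbedding

theorem IsPlanar.nonempty_gridModel [Finite V] (hG : IsPlanar G) : Nonempty (GridModel G) := by
  obtain ⟨E⟩ := hG
  have isCompact_arc {v w} (h : G.Adj v w) : IsCompact (E.arc v w '' Icc 0 1) :=
    isCompact_Icc.image (E.arc_cont h)
  have pos_far : ∀ᶠ ε in 𝓝[>] (0 : ℝ), ∀ v y, y ≠ v →
      Disjoint (gridNhd ε {E.pos v}) (gridNhd ε (E.star y)) := by
    simp only [eventually_all]
    exact fun v y h => eventually_disjoint_gridNhd isCompact_singleton (E.isCompact_star y)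
      (disjoint_singleton_left.2 (E.pos_notMem_star h))
  have arc_far : ∀ᶠ ε in 𝓝[>] (0 : ℝ), ∀ v w, G.Adj v w → ∀ y, y ≠ v → y ≠ w →
      Disjoint (gridNhd ε (E.arc v w '' Icc 0 1)) (gridNhd ε (E.star y)) := by
    simp only [eventually_all]
    exact fun v w h y hv hw => eventually_disjoint_gridNhd (isCompact_arc h) (E.isCompact_star y)
      (E.disjoint_image_arc_star h hv hw)
  obtain ⟨ε, ⟨pos_far, arc_far⟩, hε⟩ :=
    ((pos_far.and arc_far).and eventually_mem_nhdsWithin).exists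
  obtain ⟨N, hN⟩ :=
    exists_gridNhd_subset_openBox hε (isCompact_iUnion E.isCompact_star).isBounded
  choose point hpoint using fun v => exists_dist_gridPoint_lt hε (E.pos v)
  have point_mem {v} {K : Set (ℝ × ℝ)} (hv : E.pos v ∈ K) : point v ∈ gridNhd ε K :=
    mem_gridNhd_of_dist_lt hv (hpoint v)
  exact ⟨{
    region := fun v => gridNhd ε (E.star v)
    point := point
    bound := N
    region_subset := fun v => (gridNhd_mono (subset_iUnion E.star v)).trans hN
    point_mem := fun v => point_mem (E.pos_mem_star v)
    point_notMem := fun v y h => disjoint_left.1 (pos_far v y h) (point_mem rfl)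
    reachableIn_region := fun v h hh =>
      reachableIn_gridNhd hε (E.isPreconnected_star v) (point_mem (E.pos_mem_star v)) hh
    link := fun v w h => ⟨gridNhd ε (E.arc v w '' Icc 0 1),
      gridNhd_union ▸ gridNhd_mono (E.image_arc_subset_star_union h), arc_far v w h,
      reachableIn_gridNhd hε (isPreconnected_Icc.image _ (E.arc_cont h).continuousOn)
        (point_mem ⟨0, by norm_num, E.arc_zero h⟩) (point_mem ⟨1, by norm_num, E.arc_one h⟩)⟩ }⟩

end PlaneEmbedding

/-! ## Strategies -/

section Fire

variable {V : Type*} {G : SimpleGraph V} {r : V}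

lemma exists_walk_length_le_of_mem_burnedSet {P : ℕ → Set V} {t : ℕ} {w : V}
    (hw : w ∈ burnedSet G r P t) : ∃ p : G.Walk r w, p.length ≤ t := by
  induction t generalizing w with
  | zero =>
    obtain rfl : w = r := hw
    exact ⟨.nil, le_rfl⟩
  | succ t ih =>
    rcases hw with hw | ⟨⟨u, hu, huw⟩, -⟩
    · obtain ⟨p, hp⟩ := ih hw
      exact ⟨p, hp.trans t.le_succ⟩
    · obtain ⟨p, hp⟩ := ih hu
      exact ⟨p.concat huw, by simpa using hp⟩

/-- The strategy that protects each vertex of `F` at the last moment, that is, in the round in which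
an unhindered fire would reach it. -/
def lastMomentStrategy (G : SimpleGraph V) (r : V) (F : Set V) (t : ℕ) : Set V :=
  {z ∈ F | G.dist r z = t + 1}

lemma burnedSet_lastMomentStrategy_subset {F X : Set V} (hr : r ∈ X)
    (hX : ∀ u ∈ X, ∀ w ∉ X, G.Adj u w → w ∈ F) (t : ℕ) :
    burnedSet G r (lastMomentStrategy G r F) t ⊆ X := by
  induction t with
  | zero => exact Set.singleton_subset_iff.2 hr
  | succ t ih =>
    refine Set.union_subset ih ?_
    rintro w ⟨⟨u, hu, huw⟩, hw⟩
    by_contra hwX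
    obtain ⟨p, hp⟩ := exists_walk_length_le_of_mem_burnedSet hu
    have pos : 0 < G.dist r w :=
      (p.concat huw).reachable.pos_dist_of_ne (ne_of_mem_of_not_mem hr hwX)
    have le : G.dist r w ≤ t + 1 :=
      (SimpleGraph.dist_le (p.concat huw)).trans (by simpa using hp)
    exact hw (G.dist r w - 1) (by omega) ⟨hX u (ih hu) w hwX huw, by omega⟩

lemma validStrategy_lastMomentStrategy [Finite V] {F : Set V} {b : ℕ → ℕ}
    (hF : ∀ t, {z ∈ F | G.dist r z = t + 1}.ncard ≤ b t) :
    ValidStrategy G b r (lastMomentStrategy G r F) := by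
  refine fun t => ⟨Set.toFinite _, hF t, Set.disjoint_left.2 fun z hz hburned => ?_⟩
  obtain ⟨p, hp⟩ := exists_walk_length_le_of_mem_burnedSet hburned
  have := SimpleGraph.dist_le p
  have := hz.2
  omega

lemma ValidStrategy.card_saved_le_sn [Finite V] {b : ℕ → ℕ} {P : ℕ → Set V}
    (hP : ValidStrategy G b r P) : Nat.card {w : V | ∀ t, w ∉ burnedSet G r P t} ≤ sn G b r := by
  refine le_csSup ⟨Nat.card V, ?_⟩ ⟨P, hP, rfl⟩
  rintro _ ⟨Q, -, rfl⟩
  exact Finite.card_subtype_le _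

lemma card_le_sn_add_ncard [Finite V] {F X : Set V} {b : ℕ → ℕ} (hr : r ∈ X)
    (hX : ∀ u ∈ X, ∀ w ∉ X, G.Adj u w → w ∈ F)
    (hF : ∀ t, {z ∈ F | G.dist r z = t + 1}.ncard ≤ b t) : Nat.card V ≤ sn G b r + X.ncard := by
  have saved : Xᶜ ⊆ {w | ∀ t, w ∉ burnedSet G r (lastMomentStrategy G r F) t} :=
    fun w hw t hburned => hw (burnedSet_lastMomentStrategy_subset hr hX t hburned)
  have := Set.ncard_le_ncard saved
  have := (validStrategy_lastMomentStrategy hF).card_saved_le_sn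
  rw [Nat.card_coe_set_eq] at this
  have := Set.ncard_add_ncard_compl X
  omega

lemma ncard_inter_union_le {α : Type*} [Finite α] {N S A : Set α} (hS : (N ∩ S).ncard ≤ 2)
    (hA : (N ∩ A).ncard ≤ (N \ (S ∪ A)).ncard) : (N ∩ (S ∪ A)).ncard ≤ N.ncard / 2 + 1 := by
  have inter_union_le : (N ∩ (S ∪ A)).ncard ≤ (N ∩ S).ncard + (N ∩ A).ncard := by
    rw [Set.inter_union_distrib_left]
    exact Set.ncard_union_le _ _
  have := Set.ncard_inter_add_ncard_sdiff_eq_ncard N (S ∪ A)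
  omega

lemma card_lt_three_mul_sn_add_three [Finite V] {S A B : Set V} {b : ℕ → ℕ} (hdisj : Disjoint A B)
    (hcover : A ∪ B = Sᶜ) (hadj : ∀ a ∈ A, ∀ b ∈ B, ¬G.Adj a b)
    (hcard : 3 * B.ncard < 2 * Nat.card V)
    (hlevel : ∀ k, {z ∈ S | G.dist r z = k}.ncard ≤ 2)
    (hle : (G.neighborSet r ∩ A).ncard ≤ (G.neighborSet r ∩ B).ncard)
    (hb₀ : (G.neighborSet r).ncard / 2 + 1 ≤ b 0) (hb : ∀ t ≠ 0, 2 ≤ b t) :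
    Nat.card V < 3 * sn G b r + 3 := by
  have frontier (u) (hu : u ∈ insert r B) (w) (hw : w ∉ insert r B) (huw : G.Adj u w) :
      w ∈ S ∪ A ∩ G.neighborSet r := by
    by_cases hwS : w ∈ S
    · exact Or.inl hwS
    have hwA : w ∈ A := (hcover.superset hwS).resolve_right fun h => hw (Or.inr h)
    rcases hu with rfl | huB
    · exact Or.inr ⟨hwA, huw⟩
    · exact (hadj w hwA u huB huw.symm).elim
  have hS₁ : (G.neighborSet r ∩ S).ncard ≤ 2 := by
    refine le_trans (Set.ncard_le_ncard ?_) (hlevel 1)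
    exact fun z hz => ⟨hz.2, SimpleGraph.dist_eq_one_iff_adj.2 hz.1⟩
  have hle' : (G.neighborSet r ∩ A).ncard ≤ (G.neighborSet r \ (S ∪ A)).ncard := by
    rwa [Set.sdiff_eq, Set.compl_union, ← hcover, Set.union_inter_distrib_right,
      Set.inter_compl_self, Set.empty_union, ← Set.sdiff_eq B, hdisj.symm.sdiff_eq_left]
  have budget (t : ℕ) : {z ∈ S ∪ A ∩ G.neighborSet r | G.dist r z = t + 1}.ncard ≤ b t := by
    rcases eq_or_ne t 0 with rfl | ht
    · refine le_trans (Set.ncard_le_ncard ?_) ((ncard_inter_union_le hS₁ hle').trans hb₀)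
      rintro z ⟨hz, hdist⟩
      exact ⟨SimpleGraph.dist_eq_one_iff_adj.1 hdist, hz.imp_right And.left⟩
    · refine le_trans (Set.ncard_le_ncard ?_) ((hlevel (t + 1)).trans (hb t ht))
      rintro z ⟨hzS | ⟨-, hz⟩, hdist⟩
      · exact ⟨hzS, hdist⟩
      · have := SimpleGraph.dist_eq_one_iff_adj.2 hz
        omega
  have := card_le_sn_add_ncard (Set.mem_insert r B) frontier budget
  have := Set.ncard_insert_le r B
  omega

lemma eq_getVert_dist_of_mem_support {x z : V} {p : G.Walk r x} (hp : p.length = G.dist r x)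
    (hz : z ∈ p.support) : z = p.getVert (G.dist r z) := by
  obtain ⟨k, rfl, hk⟩ := SimpleGraph.Walk.mem_support_iff_exists_getVert.1 hz
  have := SimpleGraph.length_eq_dist_of_subwalk hp (p.isSubwalk_take k)
  rw [← this, SimpleGraph.Walk.take_length, min_eq_left hk]

lemma ncard_level_le_two {x y : V} {p : G.Walk r x} {q : G.Walk r y}
    (hp : p.length = G.dist r x) (hq : q.length = G.dist r y) (k : ℕ) :
    {z ∈ {z | z ∈ p.support} ∪ {z | z ∈ q.support} | G.dist r z = k}.ncard ≤ 2 := by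
  have hsub : {z ∈ {z | z ∈ p.support} ∪ {z | z ∈ q.support} | G.dist r z = k} ⊆
      {p.getVert k, q.getVert k} := by
    rintro z ⟨hz | hz, rfl⟩
    · exact Or.inl (eq_getVert_dist_of_mem_support hp hz)
    · exact Or.inr (eq_getVert_dist_of_mem_support hq hz)
  exact (Set.ncard_le_ncard hsub (Set.toFinite _)).trans ((Set.ncard_insert_le _ _).trans (by simp))

end Fire

theorem save_third_with_boosted_first_round_general {V : Type*} [Fintype V] (G : SimpleGraph V)
    [DecidableRel G.Adj] (hconn : G.Connected) (hplanar : IsPlanar G) (r : V) {b : ℕ → ℕ}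
    (hb₀ : G.degree r / 2 + 1 ≤ b 0) (hb : ∀ t ≠ 0, 2 ≤ b t) :
    (Fintype.card V : ℝ) / 3 - 1 < sn G b r := by
  obtain ⟨M⟩ := hplanar.nonempty_gridModel
  choose p hp using hconn.exists_walk_length_eq_dist r
  obtain ⟨x, y, hS⟩ := M.exists_isBalancedSeparator p
  obtain ⟨A, B, hdisj, hcover, hadj, hA, hB⟩ :=
    hS.exists_partition ⟨r, Or.inl (p x).start_mem_support⟩
  have hlevel := ncard_level_le_two (hp x) (hp y)
  have degree_eq : G.degree r = (G.neighborSet r).ncard := by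
    rw [← SimpleGraph.card_neighborSet_eq_degree, ← Nat.card_eq_fintype_card, Nat.card_coe_set_eq]
  rw [degree_eq] at hb₀
  have key : Fintype.card V < 3 * sn G b r + 3 := by
    rw [← Nat.card_eq_fintype_card]
    rcases le_total (G.neighborSet r ∩ A).ncard (G.neighborSet r ∩ B).ncard with hle | hle
    · exact card_lt_three_mul_sn_add_three hdisj hcover hadj hB hlevel hle hb₀ hb
    · exact card_lt_three_mul_sn_add_three hdisj.symm (by rwa [Set.union_comm])
        (fun b hb a ha hba => hadj a ha b hb hba.symm) hA hlevel hle hb₀ hb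
  have : (Fintype.card V : ℝ) < 3 * sn G b r + 3 := by exact_mod_cast key
  linarith

/-- Lemma 2.2: in a connected plane graph on `n ≥ 5` vertices with a fire starting at
`r`, using `2 + ⌊(deg r - 2)/2⌋` firefighters in the first round and `2` in each
subsequent round, one can save more than `n/3 - 1` vertices. -/
theorem save_third_with_boosted_first_round {V : Type} [Fintype V] (G : SimpleGraph V)
    [DecidableRel G.Adj] (hconn : G.Connected) (hplanar : IsPlanar G)
    (hn : 5 ≤ Fintype.card V) (r : V) :
    ((sn G (fun t => if t = 0 then (2 + ((G.degree r : ℤ) - 2) / 2).toNat else 2) r : ℝ)) >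
      (Fintype.card V : ℝ) / 3 - 1 :=
  save_third_with_boosted_first_round_general G hconn hplanar r
    (by rw [if_pos rfl]; omega) fun t ht => by rw [if_neg ht]
end

section
/- Let G be a connected planar graph on n ≥ 2 vertices with average degree less than 4 and having at least 2 vertices of degree lower than 4. Then ρ_{3,2}(G) ≥ 1/3, where ρ_{3,2}(G) is the surviving rate when firefighters may protect 3 vertices in the first round and 2 vertices in each subsequent round. -/
/-!
Draw the planar graph on a triangular lattice, each vertex becoming a connected cell of lattice
points, and extend a breadth-first search tree of the graph rooted at the burning vertex `r` to a
spanning tree of the lattice. Every lattice edge then closes a fundamental cycle with this tree. It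
meets only the cells of the ancestors of two vertices, hence at most two vertices in each level
around `r`. Orienting the faces across the edges whose cycle has the larger part of the remaining
vertices on the far side, there is a face which is a sink: for each of its three edges, the part `U`
beyond the cycle contains at most half of the vertices off the separator `A`. As the three cycles
sum to the boundary of the face, the three sets `U ∪ A` cover the graph.

Since the fire needs `k` rounds to reach level `k`, protecting the part of a separator in each level
just in time saves a whole side of it. If `r` has at most five neighbours, then either some `U`
contains two of them, and the complement of `U` can be saved, or each `U` contains at most one, and
each of the three sets `U ∪ A` can be saved except for `r`. In both cases at least a third of the
other vertices is saved. If `r` has at most three neighbours, protecting them saves all the others.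
Averaging over `r`, the bound on the degree sum compensates for the vertices of degree at least six,
and the two vertices of low degree for the burning vertices themselves.
-/

namespace Firefighter

open SimpleGraph Filter Topology

section Graphs

variable {V : Type*} {G : SimpleGraph V}

theorem eq_of_forall_adj_eq {α : Type*} (hG : G.Preconnected) {f : V → α}
    (hf : ∀ u v, G.Adj u v → f u = f v) (u v : V) : f u = f v := by
  obtain ⟨p⟩ := hG u v
  induction p with
  | nil => rfl
  | cons h _ ih => exact (hf _ _ h).trans ih

theorem exists_adj_dist_add_one_eq (hG : G.Connected) {r v : V} (hv : v ≠ r) :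
    ∃ u, G.Adj v u ∧ G.dist r u + 1 = G.dist r v := by
  obtain ⟨p, hp⟩ := hG.exists_walk_length_eq_dist v r
  cases p with
  | nil => exact absurd rfl hv
  | @cons _ u _ huv q =>
    refine ⟨u, huv, ?_⟩
    have hle : G.dist r u ≤ q.length := G.dist_comm ▸ dist_le q
    have htri : G.dist r v ≤ G.dist r u + G.dist u v := hG.dist_triangle
    rw [dist_eq_one_iff_adj.2 huv.symm] at htri
    rw [Walk.length_cons, G.dist_comm] at hp
    omega

theorem exists_adj_mem_notMem (hG : G.Preconnected) {S : Set V} {u v : V} (hu : u ∈ S)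
    (hv : v ∉ S) : ∃ a b, G.Adj a b ∧ a ∈ S ∧ b ∉ S := by
  obtain ⟨p⟩ := hG u v
  obtain ⟨d, -, hfst, hsnd⟩ := p.exists_boundary_dart S hu hv
  exact ⟨d.fst, d.snd, d.adj, hfst, hsnd⟩

theorem exists_rank_of_induce_connected {A : Set V} (hA : (G.induce A).Connected) {a : V}
    (ha : a ∈ A) : ∃ d : V → ℕ, ∀ p ∈ A, p ≠ a → ∃ q ∈ A, G.Adj p q ∧ d q < d p := by
  classical
  refine ⟨fun p => if hp : p ∈ A then (G.induce A).dist ⟨a, ha⟩ ⟨p, hp⟩ else 0,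
    fun p hp hpa => ?_⟩
  obtain ⟨⟨q, hq⟩, hpq, hd⟩ :=
    exists_adj_dist_add_one_eq (r := ⟨a, ha⟩) (v := ⟨p, hp⟩) hA (by simpa using hpa)
  refine ⟨q, hq, hpq, ?_⟩
  simp only [hp, hq, dite_true]
  omega

theorem induce_insert_connected {A : Set V} (hA : (G.induce A).Preconnected) {p q : V} (hp : p ∈ A)
    (hpq : G.Adj p q) : (G.induce (insert q A)).Connected := by
  have hAq : A ∪ {p, q} = insert q A := by
    rw [Set.pair_comm, Set.union_insert, Set.union_singleton, Set.insert_eq_of_mem hp]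
  exact hAq ▸
    induce_union_connected hA (induce_pair_connected_of_adj hpq).preconnected ⟨p, hp, by simp⟩

/-- A breadth-first search tree of `G` rooted at `r`, given by the parent of each vertex. -/
structure BFSTree (G : SimpleGraph V) (r : V) where
  parent : V → V
  parent_root : parent r = r
  adj_parent : ∀ {v}, v ≠ r → G.Adj v (parent v)
  dist_parent : ∀ {v}, v ≠ r → G.dist r (parent v) + 1 = G.dist r v

theorem BFSTree.nonempty (hG : G.Connected) (r : V) : Nonempty (BFSTree G r) := by
  classical
  choose! parent hadj hdist using fun v (hv : v ≠ r) => exists_adj_dist_add_one_eq hG hv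
  refine ⟨fun v => if v = r then r else parent v, by simp, fun {v} hv => ?_, fun {v} hv => ?_⟩
  · simpa [hv] using hadj v hv
  · simpa [hv] using hdist v hv

end Graphs

section PartialLabelling

variable {P ι : Type*} (H : SimpleGraph P) (allowed : ι → P → Prop)

/-- A labelling of some of the vertices of `H` (the others have label `none`) all of whose label
classes are connected, and in which every label used at a vertex is allowed there. -/
structure IsPartialLabelling (f : P → Option ι) : Prop where
  connected : ∀ w, (H.induce {p | f p = some w}).Connected
  allowed : ∀ p w, f p = some w → allowed w p

variable {H allowed} {f : P → Option ι}

theorem IsPartialLabelling.update [DecidableEq P] (hf : IsPartialLabelling H allowed f) {p q : P}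
    {w : ι} (hp : f p = some w) (hpq : H.Adj p q) (hq : f q = none) (hw : allowed w q) :
    IsPartialLabelling H allowed (Function.update f q (some w)) where
  connected x := by
    obtain rfl | hx := eq_or_ne w x
    · have hcell : {p | Function.update f q (some w) p = some w} = insert q {p | f p = some w} := by
        ext p
        obtain rfl | h := eq_or_ne p q <;> simp [*]
      exact hcell ▸ induce_insert_connected (hf.connected w).preconnected hp hpq
    · have hcell : {p | Function.update f q (some w) p = some x} = {p | f p = some x} := by
        ext p
        obtain rfl | h := eq_or_ne p q <;> simp [*]
      exact hcell ▸ hf.connected x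
  allowed p x hx := by
    obtain rfl | h := eq_or_ne p q
    · obtain rfl : w = x := by simpa using hx
      exact hw
    · exact hf.allowed p x (by simpa [h] using hx)

theorem IsPartialLabelling.exists_maximal (hf : IsPartialLabelling H allowed f)
    (hfin : {p | f p = none}.Finite) :
    ∃ g : P → Option ι, IsPartialLabelling H allowed g ∧ (∀ p w, f p = some w → g p = some w) ∧
      ∀ p q w, H.Adj p q → g p = some w → g q = none → ¬ allowed w q := by
  classical
  let S : Set (P → Option ι) :=
    {g | IsPartialLabelling H allowed g ∧ ∀ p w, f p = some w → g p = some w}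
  obtain ⟨g, ⟨hg, hfg⟩, hmin⟩ := (measure fun g : P → Option ι => {p | g p = none}.ncard).wf.has_min
    S ⟨f, hf, fun _ _ => id⟩
  refine ⟨g, hg, hfg, fun p q w hpq hp hq hw =>
    hmin (Function.update g q (some w)) ⟨hg.update hp hpq hq hw, fun x v hx => ?_⟩ ?_⟩
  · obtain rfl | h := eq_or_ne x q
    · simp [hfg x v hx] at hq
    · simp [h, hfg x v hx]
  · have hgfin : {p | g p = none}.Finite := hfin.subset fun p hp => by
      by_contra hfp
      obtain ⟨v, hv⟩ := Option.ne_none_iff_exists'.1 hfp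
      simp [hfg p v hv] at hp
    refine Set.ncard_lt_ncard ⟨fun x hx => ?_, fun h => ?_⟩ hgfin
    · obtain rfl | h := eq_or_ne x q <;> simp_all
    · simpa using h hq

end PartialLabelling

/-! ### The triangular lattice and its cycles modulo `2` -/

/-- The edges of the triangular lattice on `ℤ × ℤ`, in its three directions; the index `(i, j)` is
the lower left corner of the unit square containing the edge. -/
inductive Edge
  | horiz (i j : ℤ)
  | vert (i j : ℤ)
  | diag (i j : ℤ)
  deriving DecidableEq

namespace Edge

/-- The first end of a lattice edge. -/
def fst : Edge → ℤ × ℤ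
  | horiz i j => (i, j)
  | vert i j => (i, j)
  | diag i j => (i + 1, j)

/-- The second end of a lattice edge. -/
def snd : Edge → ℤ × ℤ
  | horiz i j => (i + 1, j)
  | vert i j => (i, j + 1)
  | diag i j => (i, j + 1)

/-- The pair of ends of a lattice edge. -/
def ends (e : Edge) : Sym2 (ℤ × ℤ) := s(e.fst, e.snd)

theorem fst_ne_snd (e : Edge) : e.fst ≠ e.snd := by
  cases e <;> simp [fst, snd]

end Edge

/-- The triangular lattice on `ℤ × ℤ`: the square grid with one diagonal in each square. -/
def lattice : SimpleGraph (ℤ × ℤ) where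
  Adj p q := ∃ e : Edge, e.ends = s(p, q)
  symm := ⟨fun _ _ ⟨e, he⟩ => ⟨e, he.trans Sym2.eq_swap⟩⟩
  loopless := ⟨by
    rintro p ⟨e, he⟩
    have := Sym2.eq_iff.1 he
    exact e.fst_ne_snd (by grind)⟩

theorem lattice_preconnected : lattice.Preconnected := by
  refine ((hasse_preconnected_of_succ ℤ).boxProd (hasse_preconnected_of_succ ℤ)).mono ?_
  rintro ⟨i, j⟩ ⟨k, l⟩ h
  simp only [boxProd_adj, hasse_adj, Order.covBy_iff_add_one_eq] at h
  rcases h with ⟨rfl | rfl, rfl⟩ | ⟨rfl | rfl, rfl⟩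
  exacts [⟨.horiz i j, rfl⟩, ⟨.horiz k j, Sym2.eq_swap⟩, ⟨.vert i j, rfl⟩,
    ⟨.vert i l, Sym2.eq_swap⟩]

/-- The triangular faces of the lattice: each unit square, indexed by its lower left corner
`(i, j)`, consists of the face `up i j` below its diagonal and the face `down i j` above it. -/
inductive Face
  | up (i j : ℤ)
  | down (i j : ℤ)
  deriving DecidableEq

namespace Face

/-- The three edges of a face. -/
def edge : Face → Fin 3 → Edge
  | up i j => ![.horiz i j, .vert i j, .diag i j]
  | down i j => ![.horiz i (j + 1), .vert (i + 1) j, .diag i j]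

/-- `t.opp k` is the face on the other side of the edge `t.edge k`. -/
def opp : Face → Fin 3 → Face
  | up i j => ![down i (j - 1), down (i - 1) j, down i j]
  | down i j => ![up i (j + 1), up (i + 1) j, up i j]

theorem edge_opp (t : Face) (k : Fin 3) : (t.opp k).edge k = t.edge k := by
  cases t <;> fin_cases k <;> simp [opp, edge]

theorem eq_or_eq_opp_of_edge_eq {t u : Face} {k l : Fin 3} (h : u.edge l = t.edge k) :
    u = t ∨ u = t.opp k := by
  cases t <;> cases u <;> fin_cases k <;> fin_cases l <;> simp_all [edge, opp, eq_sub_iff_add_eq]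

/-- `t.HasCorner p` says that `p` is one of the three corners of the face `t`. -/
def HasCorner (t : Face) (p : ℤ × ℤ) : Prop := ∃ k, p ∈ (t.edge k).ends

theorem hasCorner_up {i j : ℤ} {p : ℤ × ℤ} :
    (up i j).HasCorner p ↔ p = (i, j) ∨ p = (i + 1, j) ∨ p = (i, j + 1) := by
  simp only [HasCorner, Fin.exists_fin_succ, edge, Edge.ends, Edge.fst, Edge.snd, Sym2.mem_iff,
    Fin.succ_zero_eq_one, Fin.succ_one_eq_two, Matrix.cons_val, IsEmpty.exists_iff, or_false]
  grind

theorem hasCorner_down {i j : ℤ} {p : ℤ × ℤ} :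
    (down i j).HasCorner p ↔ p = (i + 1, j) ∨ p = (i, j + 1) ∨ p = (i + 1, j + 1) := by
  simp only [HasCorner, Fin.exists_fin_succ, edge, Edge.ends, Edge.fst, Edge.snd, Sym2.mem_iff,
    Fin.succ_zero_eq_one, Fin.succ_one_eq_two, Matrix.cons_val, IsEmpty.exists_iff, or_false]
  grind

theorem hasCorner_iff {t : Face} {i j : ℤ} : t.HasCorner (i, j) ↔
    t = up i j ∨ t = up (i - 1) j ∨ t = up i (j - 1) ∨
      t = down (i - 1) j ∨ t = down i (j - 1) ∨ t = down (i - 1) (j - 1) := by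
  cases t <;> simp only [hasCorner_up, hasCorner_down, Prod.mk.injEq, up.injEq, down.injEq,
    reduceCtorEq, false_or, or_false] <;> omega

theorem finite_setOf_hasCorner (p : ℤ × ℤ) : {t : Face | t.HasCorner p}.Finite := by
  obtain ⟨i, j⟩ := p
  simp only [hasCorner_iff, Set.ofPred_or, Set.ofPred_eq_eq_singleton]
  simp [Set.toFinite]

theorem exists_edge_eq (e : Edge) : ∃ (t : Face) (k : Fin 3), t.edge k = e := by
  cases e with
  | horiz i j => exact ⟨up i j, 0, rfl⟩
  | vert i j => exact ⟨up i j, 1, rfl⟩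
  | diag i j => exact ⟨up i j, 2, rfl⟩

end Face

theorem exists_face_of_lattice_adj {p q : ℤ × ℤ} (h : lattice.Adj p q) :
    ∃ t : Face, t.HasCorner p ∧ t.HasCorner q := by
  obtain ⟨e, he⟩ := h
  obtain ⟨t, k, rfl⟩ := Face.exists_edge_eq e
  exact ⟨t, ⟨k, he ▸ Sym2.mem_mk_left p q⟩, ⟨k, he ▸ Sym2.mem_mk_right p q⟩⟩

theorem exists_hasCorner (p : ℤ × ℤ) : ∃ t : Face, t.HasCorner p :=
  ⟨.up p.1 p.2, 0, by simp [Face.edge, Edge.ends, Edge.fst]⟩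

/-- The `1`-chains of the lattice with coefficients modulo `2`. -/
abbrev Chain := Edge →₀ ZMod 2

/-- The boundary of a `1`-chain. -/
noncomputable def boundary : Chain →ₗ[ZMod 2] (ℤ × ℤ →₀ ZMod 2) :=
  Finsupp.linearCombination (ZMod 2) fun e => .single e.fst 1 + .single e.snd 1

/-- Whether (`1`) or not (`0`) the given edge is crossed by the horizontal ray from the given face
towards `-∞`. -/
def Edge.crossing : Edge → Face → ZMod 2
  | .horiz _ _, _ => 0
  | .vert k l, .up i j => if l = j ∧ k ≤ i then 1 else 0
  | .vert k l, .down i j => if l = j ∧ k ≤ i then 1 else 0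
  | .diag k l, .up i j => if l = j ∧ k < i then 1 else 0
  | .diag k l, .down i j => if l = j ∧ k ≤ i then 1 else 0

/-- The side of a cycle, inside or outside, on which a face lies: the parity of the number of edges
of the chain crossed by the horizontal ray from the face towards `-∞`. -/
noncomputable def side : Chain →ₗ[ZMod 2] (Face → ZMod 2) :=
  Finsupp.linearCombination (ZMod 2) Edge.crossing

@[simp]
theorem boundary_single (e : Edge) :
    boundary (.single e 1) = .single e.fst 1 + .single e.snd 1 := by
  simp [boundary]

@[simp]
theorem side_single (e : Edge) : side (.single e 1) = e.crossing := by
  simp [side]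

theorem Face.opp_opp (t : Face) (k : Fin 3) : (t.opp k).opp k = t := by
  cases t <;> fin_cases k <;> simp [opp]

/-- The sum of the coefficients of a `0`-chain along the horizontal ray from `(i, j)` towards
`-∞`. -/
noncomputable def leftRay (i j : ℤ) : (ℤ × ℤ →₀ ZMod 2) →ₗ[ZMod 2] ZMod 2 :=
  Finsupp.linearCombination (ZMod 2) fun p => if p.2 = j ∧ p.1 ≤ i then 1 else 0

theorem side_up_add_side_opp {i j : ℤ} (k : Fin 3) {c : Chain} (hc : boundary c = 0) :
    side c (.up i j) + side c ((Face.up i j).opp k) = c ((Face.up i j).edge k) := by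
  let φ : (ℤ × ℤ →₀ ZMod 2) →ₗ[ZMod 2] ZMod 2 := if k = 0 then leftRay i j else 0
  let ψ : (Face → ZMod 2) →ₗ[ZMod 2] ZMod 2 := .proj (.up i j) + .proj ((Face.up i j).opp k)
  have hφ : ψ ∘ₗ side + φ ∘ₗ boundary = Finsupp.lapply ((Face.up i j).edge k) := by
    refine Finsupp.lhom_ext' fun e => LinearMap.ext_ring ?_
    fin_cases k <;> cases e <;>
      simp [ψ, φ, leftRay, Edge.crossing, Face.opp, Face.edge, Edge.fst, Edge.snd,
        Finsupp.single_apply] <;> grind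
  simpa [ψ, hc] using LinearMap.congr_fun hφ c

theorem side_add_side_opp {c : Chain} (hc : boundary c = 0) (t : Face) (k : Fin 3) :
    side c t + side c (t.opp k) = c (t.edge k) := by
  cases t with
  | up i j => exact side_up_add_side_opp k hc
  | down i j =>
    rw [add_comm, ← Face.edge_opp]
    nth_rw 2 [← Face.opp_opp (.down i j) k]
    fin_cases k <;> exact side_up_add_side_opp _ hc

theorem side_triangle (t u : Face) :
    side (∑ k, .single (t.edge k) 1) u = if u = t then 1 else 0 := by
  simp only [Fin.sum_univ_three, map_add, side_single, Pi.add_apply]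
  cases t <;> cases u <;> simp [Edge.crossing, Face.edge] <;> grind

/-- A chain avoids a set of lattice points if none of its edges has an end in the set. -/
def Chain.Avoids (c : Chain) (A : Set (ℤ × ℤ)) : Prop := ∀ e, ∀ p ∈ A, p ∈ e.ends → c e = 0

section Avoids

variable {c : Chain} {A : Set (ℤ × ℤ)} {p q : ℤ × ℤ} {t u : Face}

theorem side_eq_side_opp (hc : boundary c = 0) {k : Fin 3} (hk : c (t.edge k) = 0) :
    side c t = side c (t.opp k) :=
  CharTwo.add_eq_zero.1 ((side_add_side_opp hc t k).trans hk)

theorem side_eq_side_up_of_hasCorner (hc : boundary c = 0) (hp : c.Avoids {p})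
    (ht : t.HasCorner p) : side c t = side c (.up p.1 p.2) := by
  obtain ⟨i, j⟩ := p
  have cross (t u : Face) (k : Fin 3) (hk : (i, j) ∈ (t.edge k).ends) (hu : t.opp k = u) :
      side c t = side c u := hu ▸ side_eq_side_opp hc (hp _ _ rfl hk)
  have h₁ := cross (.down (i - 1) j) (.up i j) 1 (by simp [Face.edge, Edge.ends, Edge.fst])
    (by simp [Face.opp])
  have h₂ := cross (.up (i - 1) j) (.down (i - 1) j) 2 (by simp [Face.edge, Edge.ends, Edge.fst])
    (by simp [Face.opp])
  have h₃ := cross (.down (i - 1) (j - 1)) (.up (i - 1) j) 0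
    (by simp [Face.edge, Edge.ends, Edge.snd]) (by simp [Face.opp])
  have h₄ := cross (.up i (j - 1)) (.down (i - 1) (j - 1)) 1
    (by simp [Face.edge, Edge.ends, Edge.snd]) (by simp [Face.opp])
  have h₅ := cross (.down i (j - 1)) (.up i j) 0 (by simp [Face.edge, Edge.ends, Edge.fst])
    (by simp [Face.opp])
  rcases Face.hasCorner_iff.1 ht with rfl | rfl | rfl | rfl | rfl | rfl <;> simp [*]

theorem side_eq_of_hasCorner (hc : boundary c = 0) (hp : c.Avoids A) (hpA : p ∈ A)
    (ht : t.HasCorner p) (hu : u.HasCorner p) : side c t = side c u := by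
  have hp' : c.Avoids {p} := fun e _ hq => hp e _ (hq ▸ hpA)
  rw [side_eq_side_up_of_hasCorner hc hp' ht, side_eq_side_up_of_hasCorner hc hp' hu]

theorem side_eq_of_preconnected (hA : (lattice.induce A).Preconnected) (hc : boundary c = 0)
    (hcA : c.Avoids A) (hp : p ∈ A) (hq : q ∈ A) (ht : t.HasCorner p) (hu : u.HasCorner q) :
    side c t = side c u := by
  choose face hface using exists_hasCorner
  have hconst := eq_of_forall_adj_eq hA (f := fun p => side c (face p)) ?_ ⟨p, hp⟩ ⟨q, hq⟩
  · calc side c t = side c (face p) := side_eq_of_hasCorner hc hcA hp ht (hface p)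
      _ = side c (face q) := hconst
      _ = side c u := side_eq_of_hasCorner hc hcA hq (hface q) hu
  · rintro ⟨x, hx⟩ ⟨y, hy⟩ hxy
    obtain ⟨s, hsx, hsy⟩ := exists_face_of_lattice_adj hxy
    exact (side_eq_of_hasCorner hc hcA hx (hface x) hsx).trans
      (side_eq_of_hasCorner hc hcA hy hsy (hface y))

end Avoids

/-! ### Routings and fundamental cycles -/

section Ancestors

variable {L : Type*} (par : L → L) (x : L)

/-- The ancestors of `x` with respect to the parent function `par`, including `x` itself. -/
def ancestors : Set L := Set.range fun k => par^[k] x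

theorem self_mem_ancestors : x ∈ ancestors par x := ⟨0, rfl⟩

theorem ancestors_parent_subset : ancestors par (par x) ⊆ ancestors par x := by
  rintro _ ⟨k, rfl⟩
  exact ⟨k + 1, Function.iterate_succ_apply par k x⟩

theorem parent_mem_ancestors : par x ∈ ancestors par x := ⟨1, rfl⟩

end Ancestors

theorem boundary_single_of_ends {e : Edge} {p q : ℤ × ℤ} (he : e.ends = s(p, q)) :
    boundary (.single e 1) = .single p 1 + .single q 1 := by
  rw [boundary_single]
  rcases Sym2.eq_iff.1 he with ⟨h₁, h₂⟩ | ⟨h₁, h₂⟩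
  · rw [h₁, h₂]
  · rw [h₁, h₂, add_comm]

/-- A rule for walking from every lattice point to the point `base`, for a labelling `ℓ` of the
lattice points whose labels form a tree with parent function `par`: walk inside the current cell to
its `exit`, then step into the cell of the parent label. The lexicographic `rank` (depth of the
label, distance to the exit) decreases along the walk. -/
structure Routing {L : Type*} (ℓ : ℤ × ℤ → L) (par : L → L) where
  base : ℤ × ℤ
  exit : L → ℤ × ℤ
  next : ℤ × ℤ → ℤ × ℤ
  rank : ℤ × ℤ → ℕ ×ₗ ℕ
  exit_base : exit (ℓ base) = base
  adj_next : ∀ {p}, p ≠ base → lattice.Adj p (next p)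
  rank_next_lt : ∀ {p}, p ≠ base → rank (next p) < rank p
  label_next : ∀ {p}, p ≠ exit (ℓ p) → ℓ (next p) = ℓ p
  label_next_exit : ∀ {p}, p ≠ base → p = exit (ℓ p) → ℓ (next p) = par (ℓ p)

namespace Routing

variable {L : Type*} {ℓ : ℤ × ℤ → L} {par : L → L}

theorem nonempty_of_connected (root : L) (depth : L → ℕ)
    (hcell : ∀ x, (lattice.induce (ℓ ⁻¹' {x})).Connected)
    (hdepth : ∀ x ≠ root, depth (par x) < depth x)
    (htouch : ∀ x ≠ root, ∃ p q, lattice.Adj p q ∧ ℓ p = x ∧ ℓ q = par x) :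
    Nonempty (Routing ℓ par) := by
  classical
  have hgate : ∀ x, ∃ p q, ℓ p = x ∧ (x ≠ root → lattice.Adj p q ∧ ℓ q = par x) := fun x => by
    by_cases hx : x = root
    · obtain ⟨p, hp⟩ := (hcell x).nonempty
      exact ⟨p, p, hp, fun h => (h hx).elim⟩
    · obtain ⟨p, q, hpq, hp, hq⟩ := htouch x hx
      exact ⟨p, q, hp, fun _ => ⟨hpq, hq⟩⟩
  choose exit entry hexit hentry using hgate
  choose d hd using fun x => exists_rank_of_induce_connected (hcell x) (hexit x)
  choose! inner hinner using hd
  have hroot {p} (hp : p ≠ exit root) (he : p = exit (ℓ p)) : ℓ p ≠ root := fun h => hp (h ▸ he)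
  refine ⟨{
    base := exit root
    exit := exit
    next := fun p => if p = exit (ℓ p) then entry (ℓ p) else inner (ℓ p) p
    rank := fun p => toLex (depth (ℓ p), d (ℓ p) p)
    exit_base := by rw [hexit]
    adj_next := fun {p} hp => ?_
    rank_next_lt := fun {p} hp => ?_
    label_next := fun {p} he => ?_
    label_next_exit := fun {p} hp he => ?_ }⟩
  · split_ifs with he
    · nth_rw 1 [he]
      exact (hentry _ (hroot hp he)).1
    · exact (hinner _ p rfl he).2.1
  · split_ifs with he
    · rw [Prod.Lex.toLex_lt_toLex, (hentry _ (hroot hp he)).2]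
      exact .inl (hdepth _ (hroot hp he))
    · obtain ⟨hl, -, hlt⟩ := hinner _ p rfl he
      have hl : ℓ (inner (ℓ p) p) = ℓ p := hl
      rw [Prod.Lex.toLex_lt_toLex, hl]
      exact .inr ⟨rfl, hlt⟩
  · rw [if_neg he]
    exact (hinner _ p rfl he).1
  · rw [if_pos he]
    exact (hentry _ (hroot hp he)).2

variable (R : Routing ℓ par)

/-- The edge along which the routing leaves the point `p`. -/
noncomputable def stepEdge {p : ℤ × ℤ} (hp : p ≠ R.base) : Edge := (R.adj_next hp).choose

theorem ends_stepEdge {p : ℤ × ℤ} (hp : p ≠ R.base) : (R.stepEdge hp).ends = s(p, R.next p) :=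
  (R.adj_next hp).choose_spec

open Classical in
/-- The route from `p` to the base point, as a chain. -/
noncomputable def path (p : ℤ × ℤ) : Chain :=
  if hp : p = R.base then 0 else .single (R.stepEdge hp) 1 + path (R.next p)
termination_by R.rank p
decreasing_by exact R.rank_next_lt hp

/-- The edges used by the routing; they form a spanning tree of the lattice. -/
def tree : Set Edge := {e | ∃ (p : ℤ × ℤ) (hp : p ≠ R.base), e = R.stepEdge hp}

@[simp]
theorem path_base : R.path R.base = 0 := by
  rw [path, dif_pos rfl]

theorem path_eq {p : ℤ × ℤ} (hp : p ≠ R.base) :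
    R.path p = .single (R.stepEdge hp) 1 + R.path (R.next p) := by
  rw [path, dif_neg hp]

theorem induction {motive : ℤ × ℤ → Prop} (base : motive R.base)
    (step : ∀ p, p ≠ R.base → motive (R.next p) → motive p) (p : ℤ × ℤ) : motive p := by
  induction p using (InvImage.wf R.rank wellFounded_lt).induction with
  | _ p ih =>
    by_cases hp : p = R.base
    · exact hp ▸ base
    · exact step p hp (ih _ (R.rank_next_lt hp))

theorem boundary_path (p : ℤ × ℤ) : boundary (R.path p) = .single p 1 + .single R.base 1 := by
  induction p using R.induction with
  | base => rw [path_base, map_zero, ZModModule.add_self]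
  | step p hp ih =>
    rw [R.path_eq hp, map_add, boundary_single_of_ends (R.ends_stepEdge hp), ih,
      ZModModule.add_add_add_cancel]

theorem mem_tree_of_path_ne_zero {p : ℤ × ℤ} {e : Edge} : R.path p e ≠ 0 → e ∈ R.tree := by
  induction p using R.induction with
  | base => simp
  | step p hp ih =>
    rw [R.path_eq hp, Finsupp.add_apply, Finsupp.single_apply]
    split_ifs with he
    · exact fun _ => ⟨p, hp, he.symm⟩
    · rwa [zero_add]

theorem path_fst_add_path_snd {e : Edge} (he : e ∈ R.tree) :
    R.path e.fst + R.path e.snd = .single e 1 := by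
  obtain ⟨p, hp, rfl⟩ := he
  have hstep : R.path p + R.path (R.next p) = .single (R.stepEdge hp) 1 := by
    rw [R.path_eq hp, add_assoc, ZModModule.add_self, add_zero]
  rcases Sym2.eq_iff.1 (R.ends_stepEdge hp) with ⟨h₁, h₂⟩ | ⟨h₁, h₂⟩
  · rw [h₁, h₂, hstep]
  · rw [h₁, h₂, add_comm, hstep]

theorem label_next_mem_ancestors {p : ℤ × ℤ} (hp : p ≠ R.base) :
    ℓ (R.next p) ∈ ancestors par (ℓ p) := by
  by_cases he : p = R.exit (ℓ p)
  · exact R.label_next_exit hp he ▸ parent_mem_ancestors par (ℓ p)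
  · exact R.label_next he ▸ self_mem_ancestors par (ℓ p)

theorem ancestors_label_next_subset {p : ℤ × ℤ} (hp : p ≠ R.base) :
    ancestors par (ℓ (R.next p)) ⊆ ancestors par (ℓ p) := by
  by_cases he : p = R.exit (ℓ p)
  · exact R.label_next_exit hp he ▸ ancestors_parent_subset par (ℓ p)
  · exact (congrArg _ (R.label_next he)).subset

theorem label_mem_ancestors_of_path_ne_zero {p q : ℤ × ℤ} {e : Edge} (hq : q ∈ e.ends) :
    R.path p e ≠ 0 → ℓ q ∈ ancestors par (ℓ p) := by
  induction p using R.induction with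
  | base => simp
  | step p hp ih =>
    rw [R.path_eq hp, Finsupp.add_apply, Finsupp.single_apply]
    split_ifs with he
    · intro
      rw [← he, R.ends_stepEdge, Sym2.mem_iff] at hq
      rcases hq with rfl | rfl
      · exact self_mem_ancestors par _
      · exact R.label_next_mem_ancestors hp
    · rw [zero_add]
      exact fun h => R.ancestors_label_next_subset hp (ih h)

theorem label_eq_of_path_add_path_exit_ne_zero {p q : ℤ × ℤ} {e : Edge} (hq : q ∈ e.ends) :
    (R.path p + R.path (R.exit (ℓ p))) e ≠ 0 → ℓ q = ℓ p := by
  induction p using R.induction with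
  | base => simp [R.exit_base]
  | step p hp ih =>
    by_cases hexit : p = R.exit (ℓ p)
    · rw [← hexit, ZModModule.add_self]
      simp
    · rw [R.label_next hexit] at ih
      rw [R.path_eq hp, add_assoc, Finsupp.add_apply, Finsupp.single_apply]
      split_ifs with he
      · intro
        rw [← he, R.ends_stepEdge, Sym2.mem_iff] at hq
        rcases hq with rfl | rfl
        · rfl
        · exact R.label_next hexit
      · rwa [zero_add]

/-- The fundamental cycle of the edge `e` with respect to the spanning tree `R.tree`. -/
noncomputable def cycle (e : Edge) : Chain := R.path e.fst + R.path e.snd + .single e 1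

theorem boundary_cycle (e : Edge) : boundary (R.cycle e) = 0 := by
  rw [cycle, map_add, map_add, boundary_path, boundary_path, boundary_single,
    add_comm (Finsupp.single e.snd 1), ZModModule.add_add_add_cancel, ZModModule.add_self]

theorem cycle_eq_zero {e : Edge} (he : e ∈ R.tree) : R.cycle e = 0 := by
  rw [cycle, R.path_fst_add_path_snd he, ZModModule.add_self]

theorem cycle_apply_of_notMem_tree (e : Edge) {f : Edge} (hf : f ∉ R.tree) :
    R.cycle e f = if e = f then 1 else 0 := by
  have hpath (p : ℤ × ℤ) : R.path p f = 0 := by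
    by_contra h
    exact hf (R.mem_tree_of_path_ne_zero h)
  simp [cycle, hpath, Finsupp.single_apply]

theorem label_mem_ancestors_of_cycle_ne_zero {e f : Edge} {q : ℤ × ℤ} (hq : q ∈ f.ends)
    (hf : R.cycle e f ≠ 0) : ℓ q ∈ ancestors par (ℓ e.fst) ∪ ancestors par (ℓ e.snd) := by
  by_cases hef : e = f
  · subst hef
    rcases Sym2.mem_iff.1 hq with rfl | rfl
    · exact .inl (self_mem_ancestors par _)
    · exact .inr (self_mem_ancestors par _)
  · rw [cycle, Finsupp.add_apply, Finsupp.single_apply, if_neg hef, add_zero,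
      Finsupp.add_apply] at hf
    by_cases h : R.path e.fst f = 0
    · rw [h, zero_add] at hf
      exact .inr (R.label_mem_ancestors_of_path_ne_zero hq hf)
    · exact .inl (R.label_mem_ancestors_of_path_ne_zero hq h)

theorem label_eq_of_cycle_ne_zero {e f : Edge} (he : ℓ e.fst = ℓ e.snd) {q : ℤ × ℤ}
    (hq : q ∈ f.ends) (hf : R.cycle e f ≠ 0) : ℓ q = ℓ e.fst := by
  by_contra hne
  have hef : e ≠ f := by
    rintro rfl
    rcases Sym2.mem_iff.1 hq with rfl | rfl
    exacts [hne rfl, hne he.symm]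
  have hpath {p : ℤ × ℤ} (hp : ℓ q ≠ ℓ p) : R.path p f = R.path (R.exit (ℓ p)) f := by
    by_contra h
    exact hp (R.label_eq_of_path_add_path_exit_ne_zero hq fun h' => h (CharTwo.add_eq_zero.1 h'))
  refine hf ?_
  rw [cycle, Finsupp.add_apply, Finsupp.add_apply, Finsupp.single_apply, if_neg hef, add_zero,
    hpath hne, he, hpath (p := e.snd) (he ▸ hne), CharTwo.add_self_eq_zero]

theorem sum_cycle_edge (t : Face) :
    ∑ k, R.cycle (t.edge k) = ∑ k, Finsupp.single (t.edge k) (1 : ZMod 2) := by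
  have hcorners : ∑ k, R.path (t.edge k).fst + ∑ k, R.path (t.edge k).snd = 0 := by
    rw [← Finset.sum_add_distrib, Fin.sum_univ_three]
    have hup (a b c : Chain) : a + b + (a + c) + (b + c) = 0 := by
      rw [add_comm a b, ZModModule.add_add_add_cancel, ZModModule.add_self]
    have hdown (a b c : Chain) : a + b + (c + b) + (c + a) = 0 := by
      rw [add_comm c b, ZModModule.add_add_add_cancel, add_comm c a, ZModModule.add_self]
    cases t with
    | up i j => exact hup _ _ _
    | down i j => exact hdown _ _ _
  simp only [cycle, Finset.sum_add_distrib, hcorners, zero_add]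

end Routing

/-! ### Lattice models and balanced cuts -/

theorem exists_mem_periodicPts {α : Type*} [Finite α] [Nonempty α] (g : α → α) :
    ∃ y, y ∈ Function.periodicPts g := by
  have a : α := Classical.arbitrary α
  obtain ⟨m, n, hmn, he⟩ := Finite.exists_ne_map_eq_of_infinite fun n => g^[n] a
  wlog hlt : m < n generalizing m n
  · exact this n m hmn.symm he.symm (hmn.lt_or_gt.resolve_left hlt)
  refine ⟨g^[m] a, n - m, Nat.sub_pos_of_lt hlt, ?_⟩
  change g^[n - m] (g^[m] a) = g^[m] a
  rw [← Function.iterate_add_apply, Nat.sub_add_cancel hlt.le]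
  exact he.symm

namespace Routing

variable {L : Type*} {ℓ : ℤ × ℤ → L} {par : L → L} (R : Routing ℓ par)

theorem side_cycle_eq_side_opp {e : Edge} {t : Face} {k : Fin 3} (ht : t.edge k ∉ R.tree)
    (he : e ≠ t.edge k) : side (R.cycle e) t = side (R.cycle e) (t.opp k) :=
  side_eq_side_opp (R.boundary_cycle e) (by rw [R.cycle_apply_of_notMem_tree e ht, if_neg he])

theorem side_cycle_ne_side_opp {t : Face} {k : Fin 3} (ht : t.edge k ∉ R.tree) :
    side (R.cycle (t.edge k)) t ≠ side (R.cycle (t.edge k)) (t.opp k) := fun h => by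
  have hsum := side_add_side_opp (R.boundary_cycle (t.edge k)) t k
  rw [h, CharTwo.add_self_eq_zero, R.cycle_apply_of_notMem_tree _ ht, if_pos rfl] at hsum
  exact zero_ne_one hsum

/- Following `out` edges from face to face would eventually close up. The fundamental cycle of one
edge on this closed walk is crossed by no other edge of the walk, so it cannot separate the two
faces at that edge. -/
theorem exists_sink {X : Set Face} (hX : X.Finite) (hXne : X.Nonempty) {out : Face → Edge → Prop}
    (hout : ∀ t ∈ X, ∀ k, out t (t.edge k) →
      t.edge k ∉ R.tree ∧ t.opp k ∈ X ∧ ¬ out (t.opp k) (t.edge k)) :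
    ∃ t ∈ X, ∀ k, ¬ out t (t.edge k) := by
  by_contra! hcon
  have := hX.to_subtype
  have := hXne.to_subtype
  choose k hk using fun t : X => hcon t t.2
  choose htree hmem hnot using fun t : X => hout t t.2 (k t) (hk t)
  let next (t : X) : X := ⟨(t : Face).opp (k t), hmem t⟩
  obtain ⟨y, hy⟩ := exists_mem_periodicPts next
  let e := (y : Face).edge (k y)
  have hside : ∀ m, m + 1 ≤ Function.minimalPeriod next y →
      side (R.cycle e) (next^[m + 1] y : X) = side (R.cycle e) (next y) := by
    intro m hm
    induction m with
    | zero => rfl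
    | succ m ih =>
      let x := next^[m + 1] y
      have hxy : x ≠ y :=
        Function.not_isPeriodicPt_of_pos_of_lt_minimalPeriod m.succ_ne_zero hm
      have he : e ≠ (x : Face).edge (k x) := fun he => by
        rcases Face.eq_or_eq_opp_of_edge_eq he.symm with h | h
        · exact hxy (Subtype.ext h)
        · exact hnot y (h ▸ (he ▸ hk x : out x e))
      rw [← ih (by omega), Function.iterate_succ_apply']
      exact (R.side_cycle_eq_side_opp (htree x) he).symm
  obtain ⟨m, hm⟩ := Nat.exists_eq_succ_of_ne_zero
    (Function.minimalPeriod_pos_of_mem_periodicPts hy).ne'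
  have hclosed := hside m hm.ge
  rw [← Nat.succ_eq_add_one, ← hm, Function.iterate_minimalPeriod] at hclosed
  exact R.side_cycle_ne_side_opp (htree y) hclosed

theorem cycle_avoids {e : Edge} {x : L}
    (hx : x ∉ ancestors par (ℓ e.fst) ∪ ancestors par (ℓ e.snd)) :
    (R.cycle e).Avoids (ℓ ⁻¹' {x}) := by
  rintro f p rfl hp
  by_contra hf
  exact hx (R.label_mem_ancestors_of_cycle_ne_zero hp hf)

end Routing

/-- A model of the graph `G` in the triangular lattice: finitely many lattice points are labelled by
vertices, the others (the exterior) have label `none`, and every label class, as well as the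
exterior, is connected. Adjacent vertices of `G` have touching label classes. -/
structure LatticeModel {V : Type*} (G : SimpleGraph V) where
  label : ℤ × ℤ → Option V
  finite_interior : {p | label p ≠ none}.Finite
  connected_cell : ∀ x, (lattice.induce (label ⁻¹' {x})).Connected
  exists_touching : ∀ {u v}, G.Adj u v →
    ∃ p q, lattice.Adj p q ∧ label p = some u ∧ label q = some v

/-- A separation of `G` into `U`, the rest of the complement of `A`, and a separator `A` consisting
of two chains of ancestors, in which `U` is at most half of the complement of `A`. -/
structure IsBalancedCut {V : Type*} (G : SimpleGraph V) (par : V → V) (A U : Set V) : Prop where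
  exists_ancestors : ∃ x y, A = ancestors par x ∪ ancestors par y
  disjoint : Disjoint U A
  two_mul_ncard_le : 2 * U.ncard ≤ Aᶜ.ncard
  mem_of_adj : ∀ {u w}, u ∈ U → G.Adj u w → w ∈ U ∪ A

section LiftParent

variable {V : Type*} (par : V → V) (v₁ : V)

/-- The extension of a parent function to the exterior label `none`, whose parent is `v₁`. -/
def liftParent (x : Option V) : Option V := some (x.elim v₁ par)

theorem some_mem_ancestors_liftParent {v : V} {x : Option V} :
    some v ∈ ancestors (liftParent par v₁) x ↔ v ∈ ancestors par (x.getD v₁) := by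
  have hsome (w : V) (k : ℕ) : (liftParent par v₁)^[k] (some w) = some (par^[k] w) := by
    induction k with
    | zero => rfl
    | succ k ih => rw [Function.iterate_succ_apply', ih, Function.iterate_succ_apply']; rfl
  cases x with
  | some w => simp [ancestors, hsome]
  | none =>
    constructor
    · rintro ⟨_ | k, hk⟩
      · simp at hk
      · exact ⟨k, Option.some_injective _ ((hsome v₁ k).symm.trans hk)⟩
    · rintro ⟨k, rfl⟩
      exact ⟨k + 1, hsome v₁ k⟩

end LiftParent

namespace LatticeModel

variable {V : Type*} {G : SimpleGraph V} (M : LatticeModel G)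

theorem exists_exterior_touching [Nonempty V] :
    ∃ p q v, lattice.Adj p q ∧ M.label p = none ∧ M.label q = some v := by
  obtain ⟨a, ha⟩ := (M.connected_cell none).nonempty
  obtain ⟨b, hb⟩ := (M.connected_cell (some (Classical.arbitrary V))).nonempty
  obtain ⟨p, q, hpq, hp, hq⟩ := exists_adj_mem_notMem lattice_preconnected
    (S := {p | M.label p = none}) ha (show ¬ M.label b = none from fun h => by simp [h] at hb)
  obtain ⟨v, hv⟩ := Option.ne_none_iff_exists'.1 hq
  exact ⟨p, q, v, hpq, hp, hv⟩

theorem side_eq_of_same_cell {c : Chain} (hc : boundary c = 0) {x : Option V}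
    (hx : c.Avoids (M.label ⁻¹' {x})) {p q : ℤ × ℤ} (hp : M.label p = x) (hq : M.label q = x)
    {t u : Face} (ht : t.HasCorner p) (hu : u.HasCorner q) : side c t = side c u :=
  side_eq_of_preconnected (M.connected_cell x).preconnected hc hx hp hq ht hu

theorem side_eq_of_adj {c : Chain} (hc : boundary c = 0) {v w : V}
    (hv : c.Avoids (M.label ⁻¹' {some v})) (hw : c.Avoids (M.label ⁻¹' {some w}))
    (hvw : G.Adj v w) {p q : ℤ × ℤ} (hp : M.label p = some v) (hq : M.label q = some w)
    {t u : Face} (ht : t.HasCorner p) (hu : u.HasCorner q) : side c t = side c u := by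
  obtain ⟨p', q', hpq, hp', hq'⟩ := M.exists_touching hvw
  obtain ⟨s, hsp, hsq⟩ := exists_face_of_lattice_adj hpq
  exact (M.side_eq_of_same_cell hc hv hp hp' ht hsp).trans
    (M.side_eq_of_same_cell hc hw hq' hq hsq hu)

/-- The faces with a corner outside the exterior. -/
def interiorFaces : Set Face := {t | ∃ p, t.HasCorner p ∧ M.label p ≠ none}

theorem finite_interiorFaces : M.interiorFaces.Finite := by
  refine (M.finite_interior.biUnion fun p _ => Face.finite_setOf_hasCorner p).subset ?_
  rintro t ⟨p, ht, hp⟩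
  exact Set.mem_biUnion hp ht

theorem exists_hasCorner (v : V) : ∃ t : Face, ∃ p, t.HasCorner p ∧ M.label p = some v := by
  obtain ⟨p, hp⟩ := (M.connected_cell (some v)).nonempty
  obtain ⟨t, ht⟩ := Firefighter.exists_hasCorner p
  exact ⟨t, p, ht, hp⟩

theorem nonempty_routing {r : V} (T : BFSTree G r) {p q : ℤ × ℤ} {v₁ : V} (hpq : lattice.Adj p q)
    (hp : M.label p = none) (hq : M.label q = some v₁) :
    Nonempty (Routing M.label (liftParent T.parent v₁)) := by
  refine Routing.nonempty_of_connected (some r) (fun x => x.elim (G.dist r v₁ + 1) (G.dist r))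
    M.connected_cell ?_ ?_
  · rintro (_ | v) hv
    · exact Nat.lt_succ_self _
    · exact (T.dist_parent (by simpa using hv)).le
  · rintro (_ | v) hv
    · exact ⟨p, q, hpq, hp, hq⟩
    · exact M.exists_touching (T.adj_parent (by simpa using hv))

section Cuts

variable {par : V → V} {v₁ : V}

variable (par v₁) in
/-- The vertices whose cells may be met by the fundamental cycle of `e`: the ancestors of the labels
of the ends of `e`, where the exterior is a child of `v₁`. -/
def separator (e : Edge) : Set V :=
  ancestors par ((M.label e.fst).getD v₁) ∪ ancestors par ((M.label e.snd).getD v₁)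

theorem mem_separator {e : Edge} {p : ℤ × ℤ} {v : V} (hp : p ∈ e.ends) (hv : M.label p = some v) :
    v ∈ M.separator par v₁ e := by
  rcases Sym2.mem_iff.1 hp with rfl | rfl
  · exact .inl (by rw [hv]; exact self_mem_ancestors par v)
  · exact .inr (by rw [hv]; exact self_mem_ancestors par v)

variable (R : Routing M.label (liftParent par v₁))

theorem cycle_avoids_cell {e : Edge} {v : V} (hv : v ∉ M.separator par v₁ e) :
    (R.cycle e).Avoids (M.label ⁻¹' {some v}) :=
  R.cycle_avoids fun h =>
    hv (h.imp (some_mem_ancestors_liftParent par v₁).1 (some_mem_ancestors_liftParent par v₁).1)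

/-- The vertices whose cells are separated from the face `t` by the fundamental cycle of `e`. -/
def away (t : Face) (e : Edge) : Set V :=
  {v | v ∉ M.separator par v₁ e ∧ ∃ u p, u.HasCorner p ∧ M.label p = some v ∧
    side (R.cycle e) u ≠ side (R.cycle e) t}

variable {M} {e : Edge} {t u : Face} {v w : V} {p : ℤ × ℤ}

theorem mem_away_iff (hv : v ∉ M.separator par v₁ e) (hu : u.HasCorner p)
    (hp : M.label p = some v) :
    v ∈ M.away R t e ↔ side (R.cycle e) u ≠ side (R.cycle e) t := by
  refine ⟨fun ⟨_, u', p', hu', hp', h⟩ => ?_, fun h => ⟨hv, u, p, hu, hp, h⟩⟩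
  rwa [M.side_eq_of_same_cell (R.boundary_cycle e) (M.cycle_avoids_cell R hv) hp hp' hu hu']

theorem disjoint_away_separator : Disjoint (M.away R t e) (M.separator par v₁ e) :=
  Set.disjoint_left.2 fun _ hv => hv.1

theorem mem_away_union_separator_of_adj (hv : v ∈ M.away R t e) (hvw : G.Adj v w) :
    w ∈ M.away R t e ∪ M.separator par v₁ e := by
  by_cases hw : w ∈ M.separator par v₁ e
  · exact .inr hw
  · obtain ⟨hvsep, u, p, hu, hp, hside⟩ := hv
    obtain ⟨u', p', hu', hp'⟩ := M.exists_hasCorner w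
    refine .inl ⟨hw, u', p', hu', hp', ?_⟩
    rwa [← M.side_eq_of_adj (R.boundary_cycle e) (M.cycle_avoids_cell R hvsep)
      (M.cycle_avoids_cell R hw) hvw hp hp' hu hu']

theorem away_eq_empty_of_mem_tree (he : e ∈ R.tree) : M.away R t e = ∅ :=
  Set.eq_empty_of_forall_notMem fun _ ⟨_, _, _, _, _, h⟩ => h (by simp [R.cycle_eq_zero he])

theorem away_eq_empty_of_exterior (hG : G.Preconnected) (hfst : M.label e.fst = none)
    (hsnd : M.label e.snd = none) (ht : t ∈ M.interiorFaces) : M.away R t e = ∅ := by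
  have havoid (v : V) : (R.cycle e).Avoids (M.label ⁻¹' {some v}) := by
    rintro f p hp hpf
    by_contra hf
    have hnone := R.label_eq_of_cycle_ne_zero (hfst.trans hsnd.symm) hpf hf
    rw [hp, hfst] at hnone
    exact Option.some_ne_none v hnone
  choose face point hface hpoint using M.exists_hasCorner
  have hconst := eq_of_forall_adj_eq hG (f := fun v => side (R.cycle e) (face v)) fun v w hvw =>
    M.side_eq_of_adj (R.boundary_cycle e) (havoid v) (havoid w) hvw (hpoint v) (hpoint w)
      (hface v) (hface w)
  obtain ⟨q, htq, hq⟩ := ht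
  obtain ⟨w, hw⟩ := Option.ne_none_iff_exists'.1 hq
  refine Set.eq_empty_of_forall_notMem fun v hv =>
    (mem_away_iff R hv.1 (hface v) (hpoint v)).1 hv ((hconst v w).trans ?_)
  exact M.side_eq_of_same_cell (R.boundary_cycle e) (havoid w) (hpoint w) hw (hface w) htq

theorem away_opp {k : Fin 3} (hk : t.edge k ∉ R.tree) :
    M.away R (t.opp k) (t.edge k) = (M.separator par v₁ (t.edge k))ᶜ \ M.away R t (t.edge k) := by
  have hflip {a b c : ZMod 2} (hbc : b ≠ c) : a ≠ c ↔ ¬ a ≠ b := by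
    revert a b c; decide
  ext v
  by_cases hv : v ∈ M.separator par v₁ (t.edge k)
  · exact iff_of_false (fun h => h.1 hv) (fun h => h.1 hv)
  · obtain ⟨u, p, hu, hp⟩ := M.exists_hasCorner v
    rw [Set.mem_sdiff, mem_away_iff R hv hu hp, mem_away_iff R hv hu hp,
      hflip (R.side_cycle_ne_side_opp hk)]
    exact (and_iff_right hv).symm

theorem exists_mem_away_union_separator (t : Face) (v : V) :
    ∃ k, v ∈ M.away R t (t.edge k) ∪ M.separator par v₁ (t.edge k) := by
  by_contra! hcon
  simp only [Set.mem_union, not_or] at hcon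
  obtain ⟨u, p, hu, hp⟩ := M.exists_hasCorner v
  have hside (k : Fin 3) : side (R.cycle (t.edge k)) u = side (R.cycle (t.edge k)) t :=
    not_not.1 fun h => (hcon k).1 ((mem_away_iff R (hcon k).2 hu hp).2 h)
  have hut : (if u = t then 1 else 0 : ZMod 2) = 1 := by
    calc (if u = t then 1 else 0 : ZMod 2) = ∑ k, side (R.cycle (t.edge k)) u := by
          rw [← side_triangle, ← R.sum_cycle_edge, map_sum, Finset.sum_apply]
      _ = ∑ k, side (R.cycle (t.edge k)) t := Finset.sum_congr rfl fun k _ => hside k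
      _ = 1 := by
          rw [← Finset.sum_apply, ← map_sum, R.sum_cycle_edge, side_triangle, if_pos rfl]
  obtain rfl : u = t := by
    by_contra h
    simp [h] at hut
  obtain ⟨k, hk⟩ := hu
  exact (hcon k).2 (M.mem_separator hk hp)

theorem exists_balanced_face [Finite V] [Nonempty V] (hG : G.Preconnected) :
    ∃ t : Face, ∀ k,
      2 * (M.away R t (t.edge k)).ncard ≤ (M.separator par v₁ (t.edge k))ᶜ.ncard := by
  obtain ⟨t₀, p₀, ht₀, hp₀⟩ := M.exists_hasCorner (Classical.arbitrary V)
  suffices hout : ∀ t ∈ M.interiorFaces, ∀ k,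
      (M.separator par v₁ (t.edge k))ᶜ.ncard < 2 * (M.away R t (t.edge k)).ncard →
      t.edge k ∉ R.tree ∧ t.opp k ∈ M.interiorFaces ∧ ¬ (M.separator par v₁ (t.edge k))ᶜ.ncard <
        2 * (M.away R (t.opp k) (t.edge k)).ncard by
    obtain ⟨t, -, ht⟩ := R.exists_sink M.finite_interiorFaces ⟨t₀, p₀, ht₀, by simp [hp₀]⟩
      (out := fun t e => (M.separator par v₁ e)ᶜ.ncard < 2 * (M.away R t e).ncard) hout
    exact ⟨t, fun k => not_lt.1 (ht k)⟩
  intro t ht k hout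
  have hne : M.away R t (t.edge k) ≠ ∅ := fun h => by simp [h] at hout
  have htree : t.edge k ∉ R.tree := fun h => hne (away_eq_empty_of_mem_tree R h)
  refine ⟨htree, ?_, ?_⟩
  · by_contra hX
    have hcorner (p : ℤ × ℤ) (hp : p ∈ (t.edge k).ends) : M.label p = none := by
      by_contra hlabel
      exact hX ⟨p, ⟨k, by rwa [Face.edge_opp]⟩, hlabel⟩
    exact hne (away_eq_empty_of_exterior R hG (hcorner _ (Sym2.mem_mk_left _ _))
      (hcorner _ (Sym2.mem_mk_right _ _)) ht)
  · have hsub : M.away R t (t.edge k) ⊆ (M.separator par v₁ (t.edge k))ᶜ := fun _ hv => hv.1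
    rw [away_opp R htree, Set.ncard_sdiff hsub]
    omega

end Cuts

theorem exists_balancedCuts (M : LatticeModel G) [Finite V] (hG : G.Connected) {r : V}
    (T : BFSTree G r) :
    ∃ A U : Fin 3 → Set V, (∀ i, IsBalancedCut G T.parent (A i) (U i)) ∧
      ∀ v, ∃ i, v ∈ U i ∪ A i := by
  have := hG.nonempty
  obtain ⟨p, q, v₁, hpq, hp, hq⟩ := M.exists_exterior_touching
  obtain ⟨R⟩ := M.nonempty_routing T hpq hp hq
  obtain ⟨t, ht⟩ := exists_balanced_face R hG.preconnected
  exact ⟨fun k => M.separator T.parent v₁ (t.edge k), fun k => M.away R t (t.edge k),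
    fun k => ⟨⟨_, _, rfl⟩, disjoint_away_separator R, ht k, mem_away_union_separator_of_adj R⟩,
    exists_mem_away_union_separator R t⟩

end LatticeModel

/-! ### From plane embeddings to lattice models -/

section Skeleton

variable {V : Type*} {G : SimpleGraph V}

/-- A rough version of a lattice model, in which the cells of the vertices and of the exterior need
not cover the lattice, and the cells of adjacent vertices are joined by connected links. -/
structure LatticeSkeleton (G : SimpleGraph V) where
  cell : Option V → Set (ℤ × ℤ)
  link : V → V → Set (ℤ × ℤ)
  connected_cell : ∀ x, (lattice.induce (cell x)).Connected
  disjoint_cell : ∀ {x y}, x ≠ y → Disjoint (cell x) (cell y)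
  finite_interior : (cell none)ᶜ.Finite
  preconnected_link : ∀ {u v}, G.Adj u v → (lattice.induce (link u v)).Preconnected
  link_inter_left : ∀ {u v}, G.Adj u v → (link u v ∩ cell (some u)).Nonempty
  link_inter_right : ∀ {u v}, G.Adj u v → (link u v ∩ cell (some v)).Nonempty
  disjoint_link_cell : ∀ {u v x}, G.Adj u v → x ≠ some u → x ≠ some v →
    Disjoint (link u v) (cell x)
  disjoint_link_link : ∀ {u v x y}, G.Adj u v → G.Adj x y → s(u, v) ≠ s(x, y) →
    Disjoint (link u v) (link x y)

namespace LatticeSkeleton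

variable (S : LatticeSkeleton G)

/-- The labels allowed at a lattice point `p`: on a link only the labels of its two ends. -/
def Allowed (x : Option V) (p : ℤ × ℤ) : Prop :=
  ∀ u v, G.Adj u v → p ∈ S.link u v → x = some u ∨ x = some v

theorem allowed_of_mem_link {u v : V} (huv : G.Adj u v) {p : ℤ × ℤ} (hp : p ∈ S.link u v)
    {x : Option V} (hx : x = some u ∨ x = some v) : S.Allowed x p := by
  intro u' v' huv' hp'
  have hends : s(u, v) = s(u', v') := by
    by_contra h
    exact Set.disjoint_left.1 (S.disjoint_link_link huv huv' h) hp hp'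
  rcases Sym2.eq_iff.1 hends with ⟨rfl, rfl⟩ | ⟨rfl, rfl⟩
  exacts [hx, hx.symm]

theorem exists_isPartialLabelling :
    ∃ f, IsPartialLabelling lattice S.Allowed f ∧ ∀ p x, f p = some x ↔ p ∈ S.cell x := by
  classical
  let f (p : ℤ × ℤ) : Option (Option V) := if h : ∃ x, p ∈ S.cell x then some h.choose else none
  have hf (p x) : f p = some x ↔ p ∈ S.cell x := by
    by_cases h : ∃ y, p ∈ S.cell y
    · rw [show f p = some h.choose from dif_pos h, Option.some_inj]
      refine ⟨fun hx => hx ▸ h.choose_spec, fun hp => ?_⟩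
      by_contra hne
      exact Set.disjoint_left.1 (S.disjoint_cell hne) h.choose_spec hp
    · rw [show f p = none from dif_neg h]
      exact iff_of_false (Option.some_ne_none x).symm fun hp => h ⟨x, hp⟩
  refine ⟨f, ⟨fun x => ?_, fun p x hx u v huv hp => ?_⟩, hf⟩
  · rw [show {p | f p = some x} = S.cell x from Set.ext fun p => hf p x]
    exact S.connected_cell x
  · by_contra! h
    exact Set.disjoint_left.1 (S.disjoint_link_cell huv h.1 h.2) hp ((hf p x).1 hx)

/- A maximal labelling cannot stop inside a link, since both labels of its ends are allowed on the
whole link; it then cannot stop outside the links, where every label is allowed. -/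
theorem exists_isPartialLabelling_total :
    ∃ g : ℤ × ℤ → Option V, IsPartialLabelling lattice S.Allowed (some ∘ g) ∧
      ∀ x, ∀ p ∈ S.cell x, g p = x := by
  obtain ⟨f, hf, hcell⟩ := S.exists_isPartialLabelling
  have hfin : {p | f p = none}.Finite := S.finite_interior.subset fun p hp h => by
    simp [(hcell p none).2 h] at hp
  obtain ⟨g, hg, hfg, hmax⟩ := hf.exists_maximal hfin
  have hgcell {x p} (hp : p ∈ S.cell x) : g p = some x := hfg p x ((hcell p x).2 hp)
  have hlink {u v p} (huv : G.Adj u v) (hp : p ∈ S.link u v) : g p ≠ none := by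
    intro hnone
    obtain ⟨q, hq, hqu⟩ := S.link_inter_left huv
    obtain ⟨⟨a, ha⟩, ⟨b, hb⟩, hab, hga, hgb⟩ := exists_adj_mem_notMem (S.preconnected_link huv)
      (S := {p | g p ≠ none}) (u := ⟨q, hq⟩) (v := ⟨p, hp⟩) (by simp [hgcell hqu]) (not_not.2 hnone)
    obtain ⟨x, hx⟩ := Option.ne_none_iff_exists'.1 hga
    exact hmax a b x hab hx (not_not.1 hgb)
      (S.allowed_of_mem_link huv hb (hg.allowed a x hx u v huv ha))
  have htotal (p) : g p ≠ none := by
    intro hnone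
    obtain ⟨q, hq⟩ := (S.connected_cell none).nonempty
    obtain ⟨a, b, hab, hga, hgb⟩ := exists_adj_mem_notMem lattice_preconnected
      (S := {p | g p ≠ none}) (u := q) (v := p) (by simp [hgcell hq]) (not_not.2 hnone)
    obtain ⟨x, hx⟩ := Option.ne_none_iff_exists'.1 hga
    exact hmax a b x hab hx (not_not.1 hgb) fun u v huv hb => absurd (not_not.1 hgb) (hlink huv hb)
  choose g' hg' using fun p => Option.ne_none_iff_exists'.1 (htotal p)
  obtain rfl : g = some ∘ g' := funext hg'
  exact ⟨g', hg, fun x p hp => Option.some_injective _ (hgcell hp)⟩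

theorem nonempty_latticeModel (S : LatticeSkeleton G) : Nonempty (LatticeModel G) := by
  obtain ⟨g, hg, hcell⟩ := S.exists_isPartialLabelling_total
  refine ⟨g, S.finite_interior.subset fun p hp h => hp (hcell none p h), fun x => ?_,
    fun {u v} huv => ?_⟩
  · have hx : g ⁻¹' {x} = {p | (some ∘ g) p = some x} := Set.ext fun _ => Option.some_inj.symm
    exact hx ▸ hg.connected x
  · obtain ⟨p, hp, hpu⟩ := S.link_inter_left huv
    obtain ⟨q, hq, hqv⟩ := S.link_inter_right huv
    obtain ⟨⟨a, ha⟩, ⟨b, hb⟩, hab, hga, hgb⟩ := exists_adj_mem_notMem (S.preconnected_link huv)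
      (S := {p | g p = some u}) (u := ⟨p, hp⟩) (v := ⟨q, hq⟩) (hcell _ p hpu)
      (fun h => huv.ne (Option.some_injective _ (h.symm.trans (hcell _ q hqv))))
    exact ⟨a, b, hab, hga, (hg.allowed b (g b) rfl u v huv hb).resolve_left hgb⟩

end LatticeSkeleton

end Skeleton

section Brick

theorem induce_image_preconnected {X P : Type*} [TopologicalSpace X] {H : SimpleGraph P} {f : X → P}
    (hf : ∀ x, ∀ᶠ y in 𝓝 x, f x = f y ∨ H.Adj (f x) (f y)) {s : Set X} (hs : IsPreconnected s) :
    (H.induce (f '' s)).Preconnected := by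
  rintro ⟨_, x, hx, rfl⟩ ⟨_, y, hy, rfl⟩
  refine hs.induction₂ (fun x y => ∀ hx hy,
    (H.induce (f '' s)).Reachable ⟨f x, hx⟩ ⟨f y, hy⟩) ?_ ?_ ?_ hx hy _ _
  · intro x _
    filter_upwards [nhdsWithin_le_nhds (hf x)] with y hxy hx hy
    rcases hxy with h | h
    · exact (Subtype.ext h : (⟨f x, hx⟩ : f '' s) = ⟨f y, hy⟩) ▸ Reachable.rfl
    · exact Adj.reachable (G := H.induce (f '' s)) h
  · exact fun x y z _ hy _ hxy hyz hx hz =>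
      (hxy hx ⟨y, hy, rfl⟩).trans (hyz ⟨y, hy, rfl⟩ hz)
  · exact fun x y _ _ h hy hx => (h hx hy).symm

/-- The brick containing the point `p` of the plane, in the tiling by unit squares in which row `j`
is shifted by `j / 2`. Bricks with a common boundary point are neighbours in the lattice. -/
noncomputable def brick (p : ℝ × ℝ) : ℤ × ℤ := (⌊p.1 - ⌊p.2⌋ / 2⌋, ⌊p.2⌋)

theorem brick_surjective : Function.Surjective brick := fun q =>
  ⟨(q.1 + q.2 / 2, q.2), by simp [brick]⟩

theorem dist_le_one_of_brick_eq {p q : ℝ × ℝ} (h : brick p = brick q) : dist p q ≤ 1 := by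
  obtain ⟨h₁, h₂⟩ := Prod.ext_iff.1 h
  simp only [brick] at h₁ h₂
  rw [h₂] at h₁
  have hfst := Int.abs_sub_lt_one_of_floor_eq_floor h₁
  rw [sub_sub_sub_cancel_right] at hfst
  exact max_le hfst.le (Int.abs_sub_lt_one_of_floor_eq_floor h₂).le

theorem eventually_floor_eq_or_eq_sub_one (a : ℝ) : ∀ᶠ b in 𝓝 a, ⌊b⌋ = ⌊a⌋ ∨ ⌊b⌋ = ⌊a⌋ - 1 := by
  filter_upwards [Iio_mem_nhds (Int.lt_floor_add_one a),
    Ioi_mem_nhds (show (⌊a⌋ : ℝ) - 1 < a by linarith [Int.floor_le a])] with b hlt hgt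
  have hle : ⌊b⌋ < ⌊a⌋ + 1 := Int.floor_lt.2 (by exact_mod_cast hlt)
  have hge : ⌊a⌋ - 1 ≤ ⌊b⌋ := Int.le_floor.2 (by exact_mod_cast (Set.mem_Ioi.1 hgt).le)
  omega

theorem eventually_brick_eq_or_adj (p : ℝ × ℝ) :
    ∀ᶠ q in 𝓝 p, brick p = brick q ∨ lattice.Adj (brick p) (brick q) := by
  let x (q : ℝ × ℝ) : ℝ := q.1 - ⌊p.2⌋ / 2
  have hx : ContinuousAt x p := by fun_prop
  have hlower : ∀ᶠ q in 𝓝 p, (⌊x p⌋ : ℝ) - 1 / 2 < x q :=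
    hx.eventually (Ioi_mem_nhds (by linarith [Int.floor_le (x p)]))
  have hupper : ∀ᶠ q in 𝓝 p, x q < ⌊x p⌋ + 1 :=
    hx.eventually (Iio_mem_nhds (Int.lt_floor_add_one _))
  filter_upwards [continuousAt_snd.eventually (eventually_floor_eq_or_eq_sub_one p.2),
    hx.eventually (eventually_floor_eq_or_eq_sub_one (x p)), hlower, hupper]
    with q hrow hcol hl hu
  rcases hrow with hrow | hrow
  · have hq : brick q = (⌊x q⌋, ⌊p.2⌋) := by simp [brick, x, hrow]
    rcases hcol with hcol | hcol
    · exact .inl (by rw [hq, hcol]; rfl)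
    · refine .inr ⟨.horiz (⌊x p⌋ - 1) ⌊p.2⌋, ?_⟩
      rw [hq, hcol]
      simp [Edge.ends, Edge.fst, Edge.snd, brick, x, Sym2.eq_swap]
  · have hq : brick q = (⌊x q + 1 / 2⌋, ⌊p.2⌋ - 1) := by
      simp only [brick, x, hrow, Prod.mk.injEq, and_true]
      push_cast
      ring_nf
    have hcol : ⌊x q + 1 / 2⌋ = ⌊x p⌋ ∨ ⌊x q + 1 / 2⌋ = ⌊x p⌋ + 1 := by
      have hge : ⌊x p⌋ ≤ ⌊x q + 1 / 2⌋ := Int.le_floor.2 (by linarith)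
      have hlt : ⌊x q + 1 / 2⌋ < ⌊x p⌋ + 2 := Int.floor_lt.2 (by push_cast; linarith)
      omega
    right
    rcases hcol with hcol | hcol
    · refine ⟨.vert ⌊x p⌋ (⌊p.2⌋ - 1), ?_⟩
      rw [hq, hcol]
      simp [Edge.ends, Edge.fst, Edge.snd, brick, x, Sym2.eq_swap]
    · refine ⟨.diag ⌊x p⌋ (⌊p.2⌋ - 1), ?_⟩
      rw [hq, hcol]
      simp [Edge.ends, Edge.fst, Edge.snd, brick, x, Sym2.eq_swap]

/-- The bricks of side `1 / h` met by `s`. -/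
def bricks (h : ℝ) (s : Set (ℝ × ℝ)) : Set (ℤ × ℤ) := (fun p => brick (h • p)) '' s

theorem bricks_preconnected (h : ℝ) {s : Set (ℝ × ℝ)} (hs : IsPreconnected s) :
    (lattice.induce (bricks h s)).Preconnected :=
  induce_image_preconnected (fun p =>
    (continuous_const_smul h).continuousAt.eventually (eventually_brick_eq_or_adj (h • p))) hs

theorem eventually_disjoint_bricks {s t : Set (ℝ × ℝ)} (hs : IsCompact s) (ht : IsClosed t)
    (hst : Disjoint s t) : ∀ᶠ h in atTop, Disjoint (bricks h s) (bricks h t) := by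
  obtain ⟨δ, hδ, hdist⟩ := Metric.exists_pos_forall_lt_edist hs ht hst
  have hδ' : (0 : ℝ) < δ := hδ
  filter_upwards [eventually_ge_atTop (1 / (δ : ℝ)), eventually_gt_atTop 0] with h hh h0
  rw [Set.disjoint_left]
  rintro _ ⟨p, hp, rfl⟩ ⟨q, hq, hpq⟩
  have hle := dist_le_one_of_brick_eq hpq.symm
  rw [dist_smul₀, Real.norm_of_nonneg h0.le] at hle
  have hlt : (δ : ℝ) < dist p q := by
    have := hdist p hp q hq
    rw [edist_nndist] at this
    exact_mod_cast this
  exact absurd hle (not_le.2 (((div_le_iff₀ hδ').1 hh).trans_lt (mul_lt_mul_of_pos_left hlt h0)))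

theorem finite_compl_bricks {h : ℝ} (hh : 0 < h) {s : Set (ℝ × ℝ)} (hs : Bornology.IsBounded sᶜ) :
    (bricks h s)ᶜ.Finite := by
  obtain ⟨C, hC⟩ := hs.exists_norm_le
  obtain ⟨N, hN⟩ := exists_nat_ge (h * C)
  refine ((Set.finite_Icc (-(2 * N + 1) : ℤ) (2 * N + 1)).prod
    (Set.finite_Icc (-(2 * N + 1) : ℤ) (2 * N + 1))).subset fun q hq => ?_
  obtain ⟨p, rfl⟩ := brick_surjective q
  have hnorm : ‖p‖ ≤ N := by
    have hp : h⁻¹ • p ∈ sᶜ := fun hp => hq ⟨h⁻¹ • p, hp, by simp only [smul_inv_smul₀ hh.ne']⟩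
    have hle := hC _ hp
    rw [norm_smul, norm_inv, Real.norm_of_nonneg hh.le, inv_mul_le_iff₀ hh] at hle
    exact hle.trans hN
  obtain ⟨hp₁, hp₂⟩ := abs_le.1 (norm_fst_le p |>.trans hnorm)
  obtain ⟨hp₃, hp₄⟩ := abs_le.1 (norm_snd_le p |>.trans hnorm)
  have hfloor := Int.floor_le p.2
  have hfloor' := Int.lt_floor_add_one p.2
  simp only [brick, Set.mem_prod, Set.mem_Icc, Int.le_floor, Int.floor_le_iff]
  push_cast
  refine ⟨⟨?_, ?_⟩, ?_, ?_⟩ <;> linarith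

end Brick

theorem isPreconnected_setOf_le_norm {E : Type*} [NormedAddCommGroup E] [NormedSpace ℝ E]
    (hE : 1 < Module.rank ℝ E) {R : ℝ} (hR : 0 < R) : IsPreconnected {x : E | R ≤ ‖x‖} := by
  let push (x : E) : E := max 1 (R / ‖x‖) • x
  have hcont : ContinuousOn push {0}ᶜ := by
    intro x hx
    have : ‖x‖ ≠ 0 := norm_ne_zero_iff.2 hx
    exact ContinuousAt.continuousWithinAt (by fun_prop (disch := assumption))
  have himage : push '' {0}ᶜ = {x : E | R ≤ ‖x‖} := by
    ext y
    constructor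
    · rintro ⟨x, hx, rfl⟩
      have hx' : 0 < ‖x‖ := norm_pos_iff.2 hx
      rw [Set.mem_ofPred_eq, norm_smul, Real.norm_of_nonneg (by positivity)]
      exact (div_le_iff₀ hx').1 (le_max_right _ _)
    · intro hy
      have hy' : 0 < ‖y‖ := hR.trans_le hy
      refine ⟨y, norm_pos_iff.1 hy', ?_⟩
      simp only [push, max_eq_left ((div_le_one hy').2 hy), one_smul]
  exact himage ▸ (isConnected_compl_singleton_of_one_lt_rank hE 0).isPreconnected.image push hcont

section Embedding

variable {V : Type*} {G : SimpleGraph V} (E : PlaneEmbedding G)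

/-- The first thirds of the arcs leaving `v`. -/
def star (v : V) : Set (ℝ × ℝ) := ⋃ u : {u // G.Adj v u}, E.arc v u '' Set.Icc 0 (1 / 3)

/-- The middle third of the arc from `u` to `v`. -/
def middle (u v : V) : Set (ℝ × ℝ) := E.arc u v '' Set.Icc (1 / 3) (2 / 3)

theorem isCompact_star [Finite V] (v : V) : IsCompact (star E v) :=
  isCompact_iUnion fun u => isCompact_Icc.image (E.arc_cont u.2)

theorem isPreconnected_star (v : V) : IsPreconnected (star E v) :=
  isPreconnected_iUnion
    ⟨E.pos v, Set.mem_iInter.2 fun u => ⟨0, by norm_num, E.arc_zero u.2⟩⟩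
    fun u => isPreconnected_Icc.image _ (E.arc_cont u.2).continuousOn

variable {E} {u v w x y : V} {s t : ℝ}

theorem isCompact_middle (h : G.Adj u v) : IsCompact (middle E u v) :=
  isCompact_Icc.image (E.arc_cont h)

theorem isPreconnected_middle (h : G.Adj u v) : IsPreconnected (middle E u v) :=
  isPreconnected_Icc.image _ (E.arc_cont h).continuousOn

theorem arc_mem_star (h : G.Adj u v) (ht : t ∈ Set.Icc 0 (1 / 3)) : E.arc u v t ∈ star E u :=
  Set.mem_iUnion.2 ⟨⟨v, h⟩, t, ht, rfl⟩

theorem eq_zero_of_arc_eq_pos (h : G.Adj u v) (ht : t ∈ Set.Icc 0 1)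
    (htu : E.arc u v t = E.pos u) : t = 0 :=
  E.arc_injOn h ht (by norm_num) (htu.trans (E.arc_zero h).symm)

theorem eq_one_of_arc_eq_pos (h : G.Adj u v) (ht : t ∈ Set.Icc 0 1)
    (htv : E.arc u v t = E.pos v) : t = 1 :=
  E.arc_injOn h ht (by norm_num) (htv.trans (E.arc_one h).symm)

theorem arc_eq_pos_of_arc_eq (huv : G.Adj u v) (hxy : G.Adj x y) (hne : s(u, v) ≠ s(x, y))
    (hs : s ∈ Set.Ico 0 1) (ht : t ∈ Set.Icc 0 1) (hst : E.arc u v s = E.arc x y t) :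
    E.arc u v s = E.pos u := by
  have hs' : s ∈ Set.Icc 0 1 := Set.Ico_subset_Icc_self hs
  refine (E.arc_meet huv hxy hne ⟨⟨s, hs', rfl⟩, t, ht, hst.symm⟩).1.resolve_right fun h => ?_
  exact hs.2.ne (eq_one_of_arc_eq_pos huv hs' h)

theorem disjoint_star (huv : u ≠ v) : Disjoint (star E u) (star E v) := by
  rw [Set.disjoint_left]
  intro z hzu hzv
  obtain ⟨⟨a, ha⟩, s, hs, rfl⟩ := Set.mem_iUnion.1 hzu
  obtain ⟨⟨b, hb⟩, t, ht, hst⟩ := Set.mem_iUnion.1 hzv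
  dsimp only at ha hb hs ht hst
  have hs' : s ∈ Set.Ico 0 1 := ⟨hs.1, by linarith [hs.2]⟩
  have ht' : t ∈ Set.Ico 0 1 := ⟨ht.1, by linarith [ht.2]⟩
  by_cases hab : s(u, a) = s(v, b)
  · rcases Sym2.eq_iff.1 hab with ⟨rfl, -⟩ | ⟨rfl, rfl⟩
    · exact huv rfl
    · rw [E.arc_symm ha] at hst
      have := E.arc_injOn ha ⟨by linarith [ht.2], by linarith [ht.1]⟩
        (Set.Ico_subset_Icc_self hs') hst
      linarith [hs.2, ht.2]
  · have hu := arc_eq_pos_of_arc_eq ha hb hab hs' (Set.Ico_subset_Icc_self ht') hst.symm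
    have hv := arc_eq_pos_of_arc_eq hb ha (Ne.symm hab) ht' (Set.Ico_subset_Icc_self hs') hst
    exact huv (E.pos_inj (hu.symm.trans (hst.symm.trans hv)))

theorem arc_notMem_middle (huv : G.Adj u v) (hxy : G.Adj x y) (hne : s(u, v) ≠ s(x, y))
    (ht : t ∈ Set.Icc 0 1) : E.arc x y t ∉ middle E u v := by
  rintro ⟨s, hs, hst⟩
  have hs' : s ∈ Set.Ico 0 1 := ⟨by linarith [hs.1], by linarith [hs.2]⟩
  have := eq_zero_of_arc_eq_pos huv (Set.Ico_subset_Icc_self hs')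
    (arc_eq_pos_of_arc_eq huv hxy hne hs' ht hst)
  linarith [hs.1]

theorem disjoint_middle (huv : G.Adj u v) (hxy : G.Adj x y) (hne : s(u, v) ≠ s(x, y)) :
    Disjoint (middle E u v) (middle E x y) := by
  refine Set.disjoint_right.2 ?_
  rintro _ ⟨t, ht, rfl⟩
  exact arc_notMem_middle huv hxy hne ⟨by linarith [ht.1], by linarith [ht.2]⟩

theorem disjoint_middle_star (huv : G.Adj u v) (hu : w ≠ u) (hv : w ≠ v) :
    Disjoint (middle E u v) (star E w) := by
  refine Set.disjoint_right.2 fun z hz => ?_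
  obtain ⟨⟨b, hb⟩, t, ht, rfl⟩ := Set.mem_iUnion.1 hz
  refine arc_notMem_middle huv hb (fun h => ?_) ⟨ht.1, by linarith [ht.2]⟩
  rcases Sym2.eq_iff.1 h with ⟨h, -⟩ | ⟨-, h⟩
  exacts [hu h.symm, hv h.symm]

variable (E) in
theorem exists_forall_norm_lt [Finite V] : ∃ R > 0, (∀ v, ∀ p ∈ star E v, ‖p‖ < R) ∧
    ∀ u v, G.Adj u v → ∀ p ∈ middle E u v, ‖p‖ < R := by
  have hcompact : IsCompact
      ((⋃ v, star E v) ∪ ⋃ d : {d : V × V // G.Adj d.1 d.2}, middle E d.1.1 d.1.2) :=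
    (isCompact_iUnion (isCompact_star E)).union (isCompact_iUnion fun d => isCompact_middle d.2)
  obtain ⟨R, hR, hlt⟩ := hcompact.isBounded.exists_pos_norm_lt
  exact ⟨R, hR, fun v p hp => hlt p (.inl (Set.mem_iUnion.2 ⟨v, hp⟩)),
    fun u v huv p hp => hlt p (.inr (Set.mem_iUnion.2 ⟨⟨(u, v), huv⟩, hp⟩))⟩

variable (E) in
/-- The regions of the plane which become the cells of the vertices and of the exterior. -/
def region (R : ℝ) (x : Option V) : Set (ℝ × ℝ) := x.elim {p | R ≤ ‖p‖} (star E)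

theorem isPreconnected_region {R : ℝ} (hR : 0 < R) (x : Option V) :
    IsPreconnected (region E R x) := by
  cases x with
  | none => exact isPreconnected_setOf_le_norm (by simp [one_add_one_eq_two]) hR
  | some v => exact isPreconnected_star E v

theorem nonempty_region (hadj : ∀ v, ∃ u, G.Adj v u) {R : ℝ} (x : Option V) :
    (region E R x).Nonempty := by
  cases x with
  | none =>
    obtain ⟨p, hp⟩ := NormedSpace.exists_lt_norm ℝ (ℝ × ℝ) R
    exact ⟨p, hp.le⟩
  | some v =>
    obtain ⟨u, hu⟩ := hadj v
    exact ⟨_, arc_mem_star hu (t := 0) (by norm_num)⟩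

theorem isClosed_region [Finite V] {R : ℝ} (x : Option V) : IsClosed (region E R x) := by
  cases x with
  | none => exact isClosed_le continuous_const continuous_norm
  | some v => exact (isCompact_star E v).isClosed

theorem eventually_disjoint_bricks_region [Finite V] {R : ℝ}
    (hR : ∀ v, ∀ p ∈ star E v, ‖p‖ < R) :
    ∀ᶠ h in atTop, ∀ x y, x ≠ y → Disjoint (bricks h (region E R x)) (bricks h (region E R y)) := by
  have hstar (v : V) (x : Option V) (hx : x ≠ some v) : Disjoint (star E v) (region E R x) := by
    cases x with
    | none => exact Set.disjoint_left.2 fun p hp => not_le.2 (hR v p hp)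
    | some w => exact disjoint_star fun h => hx (congrArg some h.symm)
  simp only [eventually_all]
  rintro (_ | v) y hxy
  · obtain ⟨w, rfl⟩ := Option.ne_none_iff_exists'.1 hxy.symm
    exact (eventually_disjoint_bricks (isCompact_star E w) (isClosed_region none)
      (hstar w none hxy)).mono fun _ h => h.symm
  · exact eventually_disjoint_bricks (isCompact_star E v) (isClosed_region y) (hstar v y hxy.symm)

theorem eventually_disjoint_bricks_middle_region [Finite V] {R : ℝ}
    (hR : ∀ u v, G.Adj u v → ∀ p ∈ middle E u v, ‖p‖ < R) :
    ∀ᶠ h in atTop, ∀ u v x, G.Adj u v → x ≠ some u → x ≠ some v →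
      Disjoint (bricks h (middle E u v)) (bricks h (region E R x)) := by
  simp only [eventually_all]
  intro u v x huv hu hv
  refine eventually_disjoint_bricks (isCompact_middle huv) (isClosed_region x) ?_
  cases x with
  | none => exact Set.disjoint_left.2 fun p hp => not_le.2 (hR u v huv p hp)
  | some w => exact disjoint_middle_star huv (fun h => hu (h ▸ rfl)) (fun h => hv (h ▸ rfl))

theorem eventually_disjoint_bricks_middle [Finite V] :
    ∀ᶠ h in atTop, ∀ u v x y, G.Adj u v → G.Adj x y → s(u, v) ≠ s(x, y) →
      Disjoint (bricks h (middle E u v)) (bricks h (middle E x y)) := by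
  simp only [eventually_all]
  exact fun u v x y huv hxy hne => eventually_disjoint_bricks (isCompact_middle huv)
    (isCompact_middle hxy).isClosed (disjoint_middle huv hxy hne)

theorem nonempty_latticeSkeleton (E : PlaneEmbedding G) [Finite V] (hadj : ∀ v, ∃ u, G.Adj v u) :
    Nonempty (LatticeSkeleton G) := by
  obtain ⟨R, hR, hstar, hmiddle⟩ := exists_forall_norm_lt E
  obtain ⟨h, hh, hcell, hlink, hlinks⟩ := ((eventually_gt_atTop 0).and
    ((eventually_disjoint_bricks_region hstar).and
    ((eventually_disjoint_bricks_middle_region hmiddle).and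
    (eventually_disjoint_bricks_middle (E := E))))).exists
  refine ⟨{
    cell x := bricks h (region E R x)
    link u v := bricks h (middle E u v)
    connected_cell x := ?_
    disjoint_cell := hcell _ _
    finite_interior := finite_compl_bricks hh (isBounded_iff_forall_norm_le.2
      ⟨R, fun p (hp : ¬ R ≤ ‖p‖) => (not_le.1 hp).le⟩)
    preconnected_link huv := bricks_preconnected h (isPreconnected_middle huv)
    link_inter_left {u v} huv := ?_
    link_inter_right {u v} huv := ?_
    disjoint_link_cell := hlink _ _ _
    disjoint_link_link := hlinks _ _ _ _ }⟩
  · have : Nonempty (bricks h (region E R x)) := ((nonempty_region hadj x).image _).to_subtype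
    exact ⟨bricks_preconnected h (isPreconnected_region hR x)⟩
  · exact ⟨_, ⟨_, ⟨1 / 3, by norm_num, rfl⟩, rfl⟩, ⟨_, arc_mem_star huv (by norm_num), rfl⟩⟩
  · refine ⟨_, ⟨_, ⟨2 / 3, by norm_num, rfl⟩, rfl⟩,
      ⟨_, arc_mem_star huv.symm (t := 1 / 3) (by norm_num), ?_⟩⟩
    rw [E.arc_symm huv]
    norm_num

end Embedding

theorem nonempty_latticeModel_of_isPlanar {V : Type*} [Finite V] {G : SimpleGraph V}
    (hG : IsPlanar G) (hadj : ∀ v, ∃ u, G.Adj v u) : Nonempty (LatticeModel G) := by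
  obtain ⟨E⟩ := hG
  obtain ⟨S⟩ := nonempty_latticeSkeleton E hadj
  exact S.nonempty_latticeModel

/-! ### Firefighting -/

section Firefighting

variable {V : Type*} {G : SimpleGraph V} {b : ℕ → ℕ} {r : V}

section Strategy

/-- The vertices of `S` with a neighbour outside `S`. -/
def innerBoundary (G : SimpleGraph V) (S : Set V) : Set V := {w ∈ S | ∃ u ∉ S, G.Adj u w}

/-- The vertices at distance `k` from `r`. -/
def level (G : SimpleGraph V) (r : V) (k : ℕ) : Set V := {w | G.dist r w = k}

theorem level_one : level G r 1 = G.neighborSet r :=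
  Set.ext fun _ => dist_eq_one_iff_adj

theorem burnedSet_subset (hG : G.Connected) {S : Set V} (hr : r ∉ S) (t : ℕ) :
    burnedSet G r (fun s => innerBoundary G S ∩ level G r (s + 1)) t ⊆
      {w | w ∉ S ∧ G.dist r w ≤ t} := by
  induction t with
  | zero =>
    rintro w rfl
    exact ⟨hr, by simp⟩
  | succ t ih =>
    rintro w (hw | ⟨⟨u, hu, huw⟩, hw⟩)
    · exact ⟨(ih hw).1, (ih hw).2.trans t.le_succ⟩
    · obtain ⟨huS, hu⟩ := ih hu
      have hdist : G.dist r w ≤ t + 1 := by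
        have htri : G.dist r w ≤ G.dist r u + G.dist u w := hG.dist_triangle
        rw [dist_eq_one_iff_adj.2 huw] at htri
        omega
      refine ⟨fun hwS => ?_, hdist⟩
      obtain ⟨s, hs⟩ := Nat.exists_eq_succ_of_ne_zero
        (hG.pos_dist_of_ne fun h : r = w => hr (h ▸ hwS)).ne'
      exact hw s (by omega) ⟨⟨hwS, u, huS, huw⟩, hs⟩

/- Protecting the inner boundary of `S` level by level is always in time, since after `t` rounds the
fire has not gone beyond level `t`. -/
theorem ncard_le_sn [Finite V] (hG : G.Connected) {S : Set V} (hr : r ∉ S)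
    (hS : ∀ t, (innerBoundary G S ∩ level G r (t + 1)).ncard ≤ b t) : S.ncard ≤ sn G b r := by
  let P (t : ℕ) : Set V := innerBoundary G S ∩ level G r (t + 1)
  have hburned (t) : Disjoint S (burnedSet G r P t) :=
    Set.disjoint_right.2 fun w hw => (burnedSet_subset hG hr t hw).1
  have hvalid : ValidStrategy G b r P := fun t =>
    ⟨Set.toFinite _, hS t, (hburned t).mono_left fun _ hw => hw.1.1⟩
  calc S.ncard ≤ {w | ∀ t, w ∉ burnedSet G r P t}.ncard :=
        Set.ncard_le_ncard fun w hw t => Set.disjoint_left.1 (hburned t) hw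
    _ ≤ sn G b r := by
        refine le_csSup ⟨Nat.card V, ?_⟩ ⟨P, hvalid, (Nat.card_coe_set_eq _).symm⟩
        rintro _ ⟨Q, -, rfl⟩
        exact Nat.card_le_card_of_injective _ Subtype.val_injective

theorem ncard_le_sn_of_innerBoundary_subset [Finite V] (hG : G.Connected) {S A : Set V} (hr : r ∉ S)
    (hsub : innerBoundary G S ⊆ A ∪ G.neighborSet r) (h₀ : (S ∩ G.neighborSet r).ncard ≤ b 0)
    (hA : ∀ t ≠ 0, (A ∩ level G r (t + 1)).ncard ≤ b t) : S.ncard ≤ sn G b r := by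
  refine ncard_le_sn hG hr fun t => ?_
  obtain rfl | ht := eq_or_ne t 0
  · refine (Set.ncard_le_ncard ?_).trans h₀
    rw [zero_add, level_one]
    exact Set.inter_subset_inter_left _ fun w hw => hw.1
  · refine le_trans (Set.ncard_le_ncard fun w hw => ?_) (hA t ht)
    refine ⟨(hsub hw.1).resolve_right fun hrw => ht ?_, hw.2⟩
    have hone : G.dist r w = 1 := dist_eq_one_iff_adj.2 hrw
    have hdist : G.dist r w = t + 1 := hw.2
    omega

theorem card_le_sn_add_one_of_ncard_neighborSet_le [Finite V] (hG : G.Connected)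
    (hr : (G.neighborSet r).ncard ≤ b 0) : Nat.card V ≤ sn G b r + 1 := by
  have hsub : innerBoundary G {r}ᶜ ⊆ ∅ ∪ G.neighborSet r := by
    rintro w ⟨-, u, hu, huw⟩
    obtain rfl : u = r := not_not.1 hu
    exact .inr huw
  have hle : ({r}ᶜ : Set V).ncard ≤ sn G b r := ncard_le_sn_of_innerBoundary_subset hG (by simp)
    hsub ((Set.ncard_le_ncard Set.inter_subset_right).trans hr) (by simp)
  rw [Set.ncard_compl, Set.ncard_singleton] at hle
  omega

end Strategy

namespace BFSTree

variable (T : BFSTree G r)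

theorem dist_iterate_parent (k : ℕ) (v : V) : G.dist r (T.parent^[k] v) = G.dist r v - k := by
  induction k generalizing v with
  | zero => rfl
  | succ k ih =>
    rw [Function.iterate_succ_apply, ih]
    obtain rfl | hv := eq_or_ne v r
    · simp [T.parent_root]
    · have := T.dist_parent hv
      omega

theorem root_mem_ancestors (hG : G.Connected) (v : V) : r ∈ ancestors T.parent v := by
  refine ⟨G.dist r v, ?_⟩
  have := T.dist_iterate_parent (G.dist r v) v
  rw [Nat.sub_self, hG.dist_eq_zero_iff] at this
  exact this.symm

theorem ncard_ancestors_inter_level_le_one [Finite V] (v : V) (t : ℕ) :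
    (ancestors T.parent v ∩ level G r (t + 1)).ncard ≤ 1 := by
  rw [Set.ncard_le_one_iff_subsingleton]
  rintro _ ⟨⟨k, rfl⟩, hk⟩ _ ⟨⟨l, rfl⟩, hl⟩
  simp only [level, Set.mem_ofPred_eq, T.dist_iterate_parent] at hk hl
  rw [show k = l by omega]

end BFSTree

namespace IsBalancedCut

variable {T : BFSTree G r} {A U : Set V}

theorem root_mem (h : IsBalancedCut G T.parent A U) (hG : G.Connected) : r ∈ A := by
  obtain ⟨x, y, rfl⟩ := h.exists_ancestors
  exact .inl (T.root_mem_ancestors hG x)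

variable [Finite V]

theorem ncard_inter_level_le_two (h : IsBalancedCut G T.parent A U) (t : ℕ) :
    (A ∩ level G r (t + 1)).ncard ≤ 2 := by
  obtain ⟨x, y, rfl⟩ := h.exists_ancestors
  rw [Set.union_inter_distrib_right]
  exact (Set.ncard_union_le _ _).trans (Nat.add_le_add
    (T.ncard_ancestors_inter_level_le_one x t) (T.ncard_ancestors_inter_level_le_one y t))

theorem ncard_union_sdiff_le_sn (h : IsBalancedCut G T.parent A U) (hG : G.Connected)
    (hU : (U ∩ G.neighborSet r).ncard ≤ 1) (hb₀ : 3 ≤ b 0) (hb : ∀ t ≠ 0, 2 ≤ b t) :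
    ((U ∪ A) \ {r}).ncard ≤ sn G b r := by
  refine ncard_le_sn_of_innerBoundary_subset (A := A) hG (by simp) ?_ ?_ fun t ht =>
    (h.ncard_inter_level_le_two t).trans (hb t ht)
  · rintro w ⟨⟨hw, -⟩, u, hu, huw⟩
    obtain rfl | hur := eq_or_ne u r
    · exact .inr huw
    · exact .inl (hw.resolve_left fun hwU => hu ⟨h.mem_of_adj hwU huw.symm, hur⟩)
  · have hA := h.ncard_inter_level_le_two 0
    rw [zero_add, level_one] at hA
    calc ((U ∪ A) \ {r} ∩ G.neighborSet r).ncard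
        ≤ ((U ∩ G.neighborSet r) ∪ (A ∩ G.neighborSet r)).ncard := by
          rw [← Set.union_inter_distrib_right]
          exact Set.ncard_le_ncard (Set.inter_subset_inter_left _ Set.sdiff_subset)
      _ ≤ (U ∩ G.neighborSet r).ncard + (A ∩ G.neighborSet r).ncard := Set.ncard_union_le _ _
      _ ≤ b 0 := by omega

theorem card_le_two_mul_sn_add_one (h : IsBalancedCut G T.parent A U) (hG : G.Connected)
    (hU : (G.neighborSet r).ncard ≤ (U ∩ G.neighborSet r).ncard + b 0) (hb : ∀ t ≠ 0, 2 ≤ b t) :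
    Nat.card V ≤ 2 * sn G b r + 1 := by
  have hle : (insert r U)ᶜ.ncard ≤ sn G b r := by
    refine ncard_le_sn_of_innerBoundary_subset (A := A) hG (by simp) ?_ ?_ fun t ht =>
      (h.ncard_inter_level_le_two t).trans (hb t ht)
    · rintro w ⟨hw, u, hu, huw⟩
      obtain rfl | huU := not_not.1 hu
      · exact .inr huw
      · exact .inl ((h.mem_of_adj huU huw).resolve_left fun hwU => hw (.inr hwU))
    · have hdisj : Disjoint ((insert r U)ᶜ ∩ G.neighborSet r) (U ∩ G.neighborSet r) :=
        (Set.disjoint_left.2 fun w hw hwU => hw.1 (.inr hwU.1))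
      have hunion : ((insert r U)ᶜ ∩ G.neighborSet r ∪ U ∩ G.neighborSet r).ncard ≤
          (G.neighborSet r).ncard :=
        Set.ncard_le_ncard (Set.union_subset Set.inter_subset_right Set.inter_subset_right)
      rw [Set.ncard_union_eq hdisj] at hunion
      omega
  have hhalf := h.two_mul_ncard_le
  have hroot : 0 < A.ncard := (Set.ncard_pos).2 ⟨r, h.root_mem hG⟩
  have hinsert := Set.ncard_insert_le r U
  rw [Set.ncard_compl] at hle hhalf
  omega

end IsBalancedCut

end Firefighting

section Rate

variable {V : Type*} {G : SimpleGraph V} {b : ℕ → ℕ}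

theorem card_le_three_mul_sn_add_one [Finite V] (hG : G.Connected) (hplanar : IsPlanar G)
    (hadj : ∀ v, ∃ u, G.Adj v u) {r : V} (hr : (G.neighborSet r).ncard ≤ b 0 + 2)
    (hb₀ : 3 ≤ b 0) (hb : ∀ t ≠ 0, 2 ≤ b t) : Nat.card V ≤ 3 * sn G b r + 1 := by
  obtain ⟨M⟩ := nonempty_latticeModel_of_isPlanar hplanar hadj
  obtain ⟨T⟩ := BFSTree.nonempty hG r
  obtain ⟨A, U, hcut, hcover⟩ := M.exists_balancedCuts hG T
  by_cases htwo : ∃ i, 2 ≤ (U i ∩ G.neighborSet r).ncard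
  · obtain ⟨i, hi⟩ := htwo
    have := (hcut i).card_le_two_mul_sn_add_one hG (b := b) (by omega) hb
    omega
  · push Not at htwo
    have hsaved (i : Fin 3) : ((U i ∪ A i) \ {r}).ncard ≤ sn G b r :=
      (hcut i).ncard_union_sdiff_le_sn hG (Nat.le_of_lt_succ (htwo i)) hb₀ hb
    have hcompl : ({r}ᶜ : Set V) = ⋃ i, (U i ∪ A i) \ {r} := by
      ext v
      simp [-Set.mem_union, hcover v]
    have hsum : ({r}ᶜ : Set V).ncard ≤ 3 * sn G b r := by
      calc ({r}ᶜ : Set V).ncard ≤ ∑ i, ((U i ∪ A i) \ {r}).ncard := by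
            rw [hcompl]
            exact Set.ncard_iUnion_le_of_fintype _
        _ ≤ 3 * sn G b r := Finset.sum_le_card_nsmul _ _ _ fun i _ => hsaved i
    rw [Set.ncard_compl, Set.ncard_singleton] at hsum
    omega

variable [Fintype V] [DecidableRel G.Adj]

/- The weight multiplying `|V| - 1` is at most `6` for degrees `1` to `3`, at most `2` for degrees
`4` and `5`, and at most `0` for larger degrees. -/
theorem card_sub_one_mul_le_six_mul_sn [Nontrivial V] (hG : G.Connected) (hplanar : IsPlanar G)
    (hb₀ : 3 ≤ b 0) (hb : ∀ t ≠ 0, 2 ≤ b t) (v : V) :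
    ((Fintype.card V : ℤ) - 1) * (6 - G.degree v + if G.degree v < 4 then 1 else 0) ≤
      6 * sn G b v := by
  have hadj (v : V) : ∃ u, G.Adj v u := hG.preconnected.exists_adj_of_nontrivial v
  have hdeg : (G.neighborSet v).ncard = G.degree v := by
    rw [← Nat.card_coe_set_eq, Nat.card_eq_fintype_card, card_neighborSet_eq_degree]
  have hpos : 0 < G.degree v := (G.degree_pos_iff_exists_adj v).2 (hadj v)
  have hcard : 1 ≤ Fintype.card V := Fintype.card_pos
  split_ifs with hlow
  · have := card_le_sn_add_one_of_ncard_neighborSet_le (b := b) hG (r := v) (by omega)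
    rw [Nat.card_eq_fintype_card] at this
    nlinarith
  · by_cases hsix : G.degree v < 6
    · have := card_le_three_mul_sn_add_one (b := b) hG hplanar hadj (r := v) (by omega) hb₀ hb
      rw [Nat.card_eq_fintype_card] at this
      nlinarith
    · nlinarith

theorem sq_card_le_three_mul_sum_sn [Nontrivial V] (hG : G.Connected) (hplanar : IsPlanar G)
    (havg : 2 * Nat.card G.edgeSet < 4 * Fintype.card V)
    (hlow : 2 ≤ Finset.card {v | G.degree v < 4})
    (hb₀ : 3 ≤ b 0) (hb : ∀ t ≠ 0, 2 ≤ b t) :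
    Fintype.card V ^ 2 ≤ 3 * ∑ v, sn G b v := by
  have hdeg : ∑ v, G.degree v = 2 * Nat.card G.edgeSet := by
    rw [sum_degrees_eq_twice_card_edges, ← coe_edgeFinset, Nat.card_coe_set_eq,
      Set.ncard_coe_finset]
  have hcoeff : (2 * Fintype.card V + 4 : ℤ) ≤
      ∑ v, (6 - (G.degree v : ℤ) + if G.degree v < 4 then 1 else 0) := by
    rw [Finset.sum_add_distrib, Finset.sum_sub_distrib, Finset.sum_boole, ← Nat.cast_sum, hdeg,
      Finset.sum_const, Finset.card_univ, nsmul_eq_mul]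
    omega
  have hsum := Finset.sum_le_sum fun v (_ : v ∈ Finset.univ) =>
    card_sub_one_mul_le_six_mul_sn hG hplanar hb₀ hb v
  rw [← Finset.mul_sum, ← Finset.mul_sum] at hsum
  have hcard : 1 < Fintype.card V := Fintype.one_lt_card
  zify at hcard ⊢
  nlinarith

end Rate

end Firefighter

/-- Corollary 2.3: a connected planar graph on `n ≥ 2` vertices with average degree less
than 4 and at least two vertices of degree lower than 4 satisfies `ρ_{3,2}(G) ≥ 1/3`,
where 3 vertices may be protected in the first round and 2 in each subsequent round. -/
theorem surviving_rate_three_two {V : Type} [Fintype V] (G : SimpleGraph V)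
    [DecidableRel G.Adj] (hconn : G.Connected) (hplanar : IsPlanar G)
    (hn : 2 ≤ Fintype.card V)
    (havg : (2 * (Nat.card G.edgeSet) : ℝ) / (Fintype.card V : ℝ) < 4)
    (hsmall : ∃ u v : V, u ≠ v ∧ G.degree u < 4 ∧ G.degree v < 4) :
    survivingRate G (fun t => if t = 0 then 3 else 2) ≥ 1 / 3 := by
  have : Nontrivial V := Fintype.one_lt_card_iff_nontrivial.1 hn
  have hpos : (0 : ℝ) < Fintype.card V := Nat.cast_pos.2 Fintype.card_pos
  have hedges : 2 * Nat.card G.edgeSet < 4 * Fintype.card V := by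
    exact_mod_cast (div_lt_iff₀ hpos).1 havg
  have hlow : 2 ≤ Finset.card {v | G.degree v < 4} := by
    obtain ⟨u, v, huv, hu, hv⟩ := hsmall
    exact Finset.one_lt_card.2 ⟨u, by simpa using hu, v, by simpa using hv, huv⟩
  have hsum : Fintype.card V ^ 2 ≤ 3 * ∑ v, sn G (fun t => if t = 0 then 3 else 2) v :=
    Firefighter.sq_card_le_three_mul_sum_sn hconn hplanar hedges hlow le_rfl
      fun t ht => (if_neg ht).ge
  rw [survivingRate, ge_iff_le, div_le_div_iff₀ three_pos (pow_pos hpos 2)]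
  have : (Fintype.card V : ℝ) ^ 2 ≤ 3 * ∑ v, (sn G (fun t => if t = 0 then 3 else 2) v : ℝ) := by
    exact_mod_cast hsum
  linarith
end
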